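/- Let φ(x,t) = t^p + a(x) t^q with 1 < p < q < ∞ and a a nonnegative function in C^{0,α}(ℝⁿ) for some α ∈ (0,1]. Assume E ⊆ ℝⁿ is a closed set which is locally uniformly infimally φ-fat with constant c_fat > 0 and radius 0 < r_o ≤ 1. Then there exist ε = ε(n,p,q,c_fat) with 0 < ε < p − 1, a constant ĉ_fat = ĉ_fat(n,p,q,c_fat) > 0, and a radius 0 < r̂_o ≤ 1 depending only on n,p,q and r_o, such that E is locally uniformly infimally φ^{1−ε/p}-fat with constant ĉ_fat and radius r̂_o, where the integrand φ^{1−ε/p}(x,t) = (t^p + a(x) t^q)^{1−ε/p} and its infimal capacity is defined with normalization ((φ_O^-)(t))^{1−ε/p}. -/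

import Mathlib

open MeasureTheory Metric Set

noncomputable section

/-- Euclidean space `ℝⁿ`. -/
abbrev En (n : ℕ) : Type := EuclideanSpace ℝ (Fin n)

/-- Norm of the (a.e. defined, by Rademacher's theorem) gradient of `u` at `x`. -/
def gnorm {n : ℕ} (u : En n → ℝ) (x : En n) : ℝ := ‖fderiv ℝ u x‖

/-- Admissible test functions for the level-`t` capacity of `E` in `O`:
Lipschitz on the closure of `O`, `u ≥ t` on `E`, `u = 0` on `∂O`. -/
def Adm {n : ℕ} (E O : Set (En n)) (t : ℝ) : Set (En n → ℝ) :=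
  {u | (∃ K, LipschitzOnWith K u (closure O)) ∧ (∀ x ∈ E, t ≤ u x) ∧
    ∀ x ∈ frontier O, u x = 0}

/-- Level-`t` variational capacity with integrand `ψ` and normalization `ψm`. -/
def capLevel {n : ℕ} (ψ : En n → ℝ → ℝ) (ψm : ℝ → ℝ)
    (E O : Set (En n)) (t : ℝ) : ℝ :=
  sInf ((fun u => ∫ x in O, ψ x (gnorm u x) / ψm t) '' Adm E O t)

/-- Infimal capacity with integrand `ψ` and normalization `ψm`. -/
def capInfGen {n : ℕ} (ψ : En n → ℝ → ℝ) (ψm : ℝ → ℝ) (E O : Set (En n)) : ℝ :=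
  ⨅ t : Ioi (0 : ℝ), capLevel ψ ψm E O (t : ℝ)

/-- The double-phase integrand `φ(x,t) = t^p + a(x) t^q`. -/
def phi {n : ℕ} (a : En n → ℝ) (p q : ℝ) (x : En n) (t : ℝ) : ℝ :=
  t ^ p + a x * t ^ q

/-- `a_O^- = inf_{x ∈ O} a(x)`. -/
def aInfOn {n : ℕ} (a : En n → ℝ) (O : Set (En n)) : ℝ := sInf (a '' O)

/-- `a_O^+ = sup_{x ∈ O} a(x)`. -/
def aSupOn {n : ℕ} (a : En n → ℝ) (O : Set (En n)) : ℝ := sSup (a '' O)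

/-- `φ_O^-(t) = t^p + a_O^- t^q`. -/
def phiMinus {n : ℕ} (a : En n → ℝ) (p q : ℝ) (O : Set (En n)) (t : ℝ) : ℝ :=
  t ^ p + aInfOn a O * t ^ q

/-- Level-`t` variational capacity for the double-phase integrand. -/
def capPhiLevel {n : ℕ} (a : En n → ℝ) (p q t : ℝ) (E O : Set (En n)) : ℝ :=
  capLevel (phi a p q) (phiMinus a p q O) E O t

/-- Infimal `φ`-capacity. -/
def capPhiInf {n : ℕ} (a : En n → ℝ) (p q : ℝ) (E O : Set (En n)) : ℝ :=
  ⨅ t : Ioi (0 : ℝ), capPhiLevel a p q (t : ℝ) E O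

/-- Variational `p`-capacity. -/
def capP {n : ℕ} (p : ℝ) (E O : Set (En n)) : ℝ :=
  sInf ((fun u => ∫ x in O, gnorm u x ^ p) '' Adm E O 1)

/-- The rescaled set `{x ∈ B̄(0,1/2) : z + r x ∈ E}`. -/
def shiftedSet {n : ℕ} (E : Set (En n)) (z : En n) (r : ℝ) : Set (En n) :=
  {x ∈ closedBall (0 : En n) (1 / 2) | z + r • x ∈ E}

/-- Local uniform infimal `φ`-fatness with parameters `cfat` and `ro`. -/
def LocUnifPhiFat {n : ℕ} (a : En n → ℝ) (p q : ℝ) (E : Set (En n))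
    (cfat ro : ℝ) : Prop :=
  ∀ z ∈ E, ∀ r : ℝ, 0 < r → r < ro →
    cfat ≤ capPhiInf (fun x => a (z + r • x)) p q (shiftedSet E z r) (ball (0 : En n) 1)

/-- Local uniform `p`-fatness with parameters `cfat` and `ro`. -/
def LocUnifPFat {n : ℕ} (p : ℝ) (E : Set (En n)) (cfat ro : ℝ) : Prop :=
  ∀ z ∈ E, ∀ r : ℝ, 0 < r → r < ro →
    cfat ≤ capP p (shiftedSet E z r) (ball (0 : En n) 1)

/-- `Lip_0(Ω)`: Lipschitz functions with compact support contained in `Ω`,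
extended by zero to `ℝⁿ`. -/
def Lip0 {n : ℕ} (Ω : Set (En n)) : Set (En n → ℝ) :=
  {u | (∃ K, LipschitzWith K u) ∧ HasCompactSupport u ∧ tsupport u ⊆ Ω}

/-- Restricted centered maximal operator `M_R f(x) = sup_{0<r<R} ⨍_{B(x,r)} |f|`. -/
def maxOp {n : ℕ} (R : ℝ) (f : En n → ℝ) (x : En n) : ℝ :=
  ⨆ r : Ioo (0 : ℝ) R, ⨍ y in ball x (r : ℝ), |f y|

/-- Local uniform infimal fatness for the powered double-phase integrand
`φ^γ(x,t) = (t^p + a(x) t^q)^γ`, with normalization `(φ_O^-(t))^γ`. -/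
def LocUnifPhiPowFat {n : ℕ} (a : En n → ℝ) (p q γ : ℝ) (E : Set (En n))
    (cfat ro : ℝ) : Prop :=
  ∀ z ∈ E, ∀ r : ℝ, 0 < r → r < ro →
    cfat ≤ capInfGen (fun x s => phi a p q (z + r • x) s ^ γ)
        (fun s => phiMinus (fun x => a (z + r • x)) p q (ball (0 : En n) 1) s ^ γ)
        (shiftedSet E z r) (ball (0 : En n) 1)

lemma ae_ae_differentiableAt_line {n : ℕ} {u : En n → ℝ} {K : NNReal} (hu : LipschitzWith K u)
    (h : En n) : ∀ᵐ x : En n, ∀ᵐ t : ℝ, DifferentiableAt ℝ u (x + t • h) := by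
  have hm : MeasurableSet {y : En n | DifferentiableAt ℝ u y} :=
    measurableSet_of_differentiableAt ℝ u
  have hmp : MeasurableSet {z : En n × ℝ | DifferentiableAt ℝ u (z.1 + z.2 • h)} :=
    hm.preimage (by fun_prop : Measurable fun z : En n × ℝ => z.1 + z.2 • h)
  rw [Measure.ae_ae_comm hmp]
  refine Filter.Eventually.of_forall fun t => ?_
  exact (measurePreserving_add_right volume (t • h)).quasiMeasurePreserving.ae
    hu.ae_differentiableAt

lemma enorm_sub_le_lintegral_line {n : ℕ} {u : En n → ℝ} {K : NNReal} (hu : LipschitzWith K u)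
    {x h : En n} (hx : ∀ᵐ t : ℝ, DifferentiableAt ℝ u (x + t • h)) :
    ‖u (x + h) - u x‖ₑ ≤ ∫⁻ t in Ioc (0 : ℝ) 1, ‖h‖ₑ * ‖fderiv ℝ u (x + t • h)‖ₑ := by
  have hlip : LipschitzWith (K * ‖h‖₊) fun t : ℝ => u (x + t • h) := by
    refine hu.comp (LipschitzWith.of_dist_le_mul fun s t => ?_)
    rw [dist_add_left, dist_eq_norm, ← sub_smul, norm_smul, dist_eq_norm, mul_comm]
    rfl
  have hac := (hlip.lipschitzOnWith (s := uIcc (0 : ℝ) 1)).absolutelyContinuousOnInterval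
  have hftc := hac.integral_deriv_eq_sub
  simp only [one_smul, zero_smul, add_zero] at hftc
  rw [← hftc, intervalIntegral.integral_of_le zero_le_one]
  refine (enorm_integral_le_lintegral_enorm _).trans (lintegral_mono_ae ?_)
  filter_upwards [ae_restrict_of_ae hx] with t ht
  have hline : HasDerivAt (fun t : ℝ => x + t • h) h t := by
    simpa using ((hasDerivAt_id t).smul_const h).const_add x
  have hd : HasDerivAt (fun t : ℝ => u (x + t • h)) (fderiv ℝ u (x + t • h) h) t :=
    ht.hasFDerivAt.comp_hasDerivAt t hline
  rw [hd.deriv, mul_comm]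
  exact (fderiv ℝ u (x + t • h)).le_opENorm h

/-- The `L¹` norm of a difference by a translation, on a convex set. -/
lemma lintegral_translate_sub_le {n : ℕ} {u : En n → ℝ} {K : NNReal} (hu : LipschitzWith K u)
    (h : En n) {A : Set (En n)} (hA : MeasurableSet A) (hc : Convex ℝ A) :
    ∫⁻ x in {x | x ∈ A ∧ x + h ∈ A}, ‖u (x + h) - u x‖ₑ
      ≤ ‖h‖ₑ * ∫⁻ x in A, ‖fderiv ℝ u x‖ₑ := by
  have hAh : MeasurableSet {x : En n | x ∈ A ∧ x + h ∈ A} :=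
    hA.inter (hA.preimage (by fun_prop : Measurable fun x : En n => x + h))
  have hmg : Measurable fun x => ‖fderiv ℝ u x‖ₑ := (measurable_fderiv ℝ u).enorm
  have hind : Measurable (A.indicator fun x => ‖fderiv ℝ u x‖ₑ) := hmg.indicator hA
  calc ∫⁻ x in {x | x ∈ A ∧ x + h ∈ A}, ‖u (x + h) - u x‖ₑ
      ≤ ∫⁻ x in {x | x ∈ A ∧ x + h ∈ A}, ∫⁻ t in Ioc (0 : ℝ) 1,
          ‖h‖ₑ * A.indicator (fun x => ‖fderiv ℝ u x‖ₑ) (x + t • h) := by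
        refine lintegral_mono_ae ?_
        filter_upwards [ae_restrict_of_ae (ae_ae_differentiableAt_line hu h),
          ae_restrict_mem hAh] with x hx hxA
        refine (enorm_sub_le_lintegral_line hu hx).trans (lintegral_mono_ae ?_)
        filter_upwards [ae_restrict_mem measurableSet_Ioc] with t ht
        have hmem : x + t • h ∈ A := by
          have := hc hxA.1 hxA.2 (sub_nonneg.2 ht.2) ht.1.le (by ring)
          convert this using 1
          module
        rw [indicator_of_mem hmem]
    _ ≤ ∫⁻ x, ∫⁻ t in Ioc (0 : ℝ) 1,
          ‖h‖ₑ * A.indicator (fun x => ‖fderiv ℝ u x‖ₑ) (x + t • h) :=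
        setLIntegral_le_lintegral _ _
    _ = ∫⁻ t in Ioc (0 : ℝ) 1, ∫⁻ x,
          ‖h‖ₑ * A.indicator (fun x => ‖fderiv ℝ u x‖ₑ) (x + t • h) := by
        refine lintegral_lintegral_swap (Measurable.aemeasurable ?_)
        exact (hind.comp (by fun_prop : Measurable fun z : En n × ℝ => z.1 + z.2 • h)).const_mul _
    _ = ∫⁻ _t in Ioc (0 : ℝ) 1, ‖h‖ₑ * ∫⁻ x in A, ‖fderiv ℝ u x‖ₑ := by
        congr 1
        ext t
        rw [lintegral_const_mul' _ _ enorm_ne_top,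
          lintegral_add_right_eq_self (fun x => A.indicator (fun x => ‖fderiv ℝ u x‖ₑ) x),
          lintegral_indicator hA]
    _ = ‖h‖ₑ * ∫⁻ x in A, ‖fderiv ℝ u x‖ₑ := by simp

lemma volume_ball_pos {n : ℕ} (z : En n) {ρ : ℝ} (hρ : 0 < ρ) : 0 < volume.real (ball z ρ) :=
  ENNReal.toReal_pos (measure_ball_pos _ _ hρ).ne' measure_ball_lt_top.ne

lemma volume_real_ball_mul {n : ℕ} (y z : En n) {ρ s : ℝ} (hs : 0 < s) :
    volume.real (ball y (s * ρ)) = s ^ n * volume.real (ball z ρ) := by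
  rw [Measure.addHaar_real_ball_center volume z, measureReal_def,
    Measure.addHaar_ball_mul_of_pos volume y hs, ENNReal.toReal_mul,
    ENNReal.toReal_ofReal (by positivity), finrank_euclideanSpace_fin, measureReal_def]

lemma lintegral_lintegral_sub_le {n : ℕ} {u : En n → ℝ} {K : NNReal} (hu : LipschitzWith K u)
    (z : En n) (ρ : ℝ) :
    ∫⁻ x in ball z ρ, ∫⁻ y in ball z ρ, ‖u y - u x‖ₑ
      ≤ ENNReal.ofReal (2 * ρ) * (∫⁻ x in ball z ρ, ‖fderiv ℝ u x‖ₑ)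
        * volume (ball (0 : En n) (2 * ρ)) := by
  set B := ball z ρ with hB
  have hBm : MeasurableSet B := measurableSet_ball
  have huc := hu.continuous
  set D : Set (En n × En n) := {w | w.1 ∈ B ∧ w.1 + w.2 ∈ B} with hD
  have hDm : MeasurableSet D := by
    refine (hBm.preimage measurable_fst).inter
      (hBm.preimage (?_ : Measurable fun w : En n × En n => w.1 + w.2))
    fun_prop
  have hF : Measurable (D.indicator fun w => ‖u (w.1 + w.2) - u w.1‖ₑ) := by
    refine Measurable.indicator ?_ hDm
    exact (Continuous.measurable (by fun_prop)).enorm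
  calc ∫⁻ x in B, ∫⁻ y in B, ‖u y - u x‖ₑ
      = ∫⁻ x, ∫⁻ h, D.indicator (fun w => ‖u (w.1 + w.2) - u w.1‖ₑ) (x, h) := by
        rw [← lintegral_indicator hBm]
        congr 1
        ext x
        by_cases hx : x ∈ B
        · rw [indicator_of_mem hx, ← lintegral_indicator hBm, ← lintegral_add_left_eq_self _ x]
          congr 1
          ext h
          by_cases hh : x + h ∈ B
          · rw [indicator_of_mem hh, indicator_of_mem (show (x, h) ∈ D from ⟨hx, hh⟩)]
          · rw [indicator_of_notMem hh, indicator_of_notMem (show (x, h) ∉ D from fun H => hh H.2)]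
        · rw [indicator_of_notMem hx, eq_comm]
          refine (lintegral_congr fun h => ?_).trans lintegral_zero
          exact indicator_of_notMem (show (x, h) ∉ D from fun H => hx H.1) _
    _ = ∫⁻ h, ∫⁻ x, D.indicator (fun w => ‖u (w.1 + w.2) - u w.1‖ₑ) (x, h) :=
        lintegral_lintegral_swap hF.aemeasurable
    _ ≤ ∫⁻ h, (ball (0 : En n) (2 * ρ)).indicator
          (fun _ => ENNReal.ofReal (2 * ρ) * ∫⁻ x in B, ‖fderiv ℝ u x‖ₑ) h := by
        refine lintegral_mono fun h => ?_
        have hAh : MeasurableSet {x : En n | x ∈ B ∧ x + h ∈ B} :=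
          hBm.inter (hBm.preimage (by fun_prop : Measurable fun x : En n => x + h))
        by_cases hh : h ∈ ball (0 : En n) (2 * ρ)
        · rw [indicator_of_mem hh]
          have := lintegral_translate_sub_le hu h hBm (convex_ball z ρ)
          rw [← lintegral_indicator hAh] at this
          refine le_trans (le_of_eq ?_) (this.trans ?_)
          · congr 1
          · gcongr
            rw [← ofReal_norm]
            exact ENNReal.ofReal_le_ofReal (mem_ball_zero_iff.1 hh).le
        · rw [indicator_of_notMem hh]
          refine le_of_eq ((lintegral_congr fun x => ?_).trans lintegral_zero)
          refine indicator_of_notMem (fun H => hh ?_) _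
          have h1 := mem_ball.1 H.1
          have h2 := mem_ball.1 H.2
          rw [mem_ball_zero_iff]
          calc ‖h‖ = dist (x + h) x := by simp
            _ ≤ dist (x + h) z + dist x z := dist_triangle_right _ _ _
            _ < 2 * ρ := by linarith
    _ = _ := by rw [lintegral_indicator measurableSet_ball, setLIntegral_const]

lemma continuous_integrableOn_ball {n : ℕ} {u : En n → ℝ} (hu : Continuous u) (z : En n) (ρ : ℝ) :
    IntegrableOn u (ball z ρ) :=
  (hu.continuousOn.integrableOn_compact (isCompact_closedBall z ρ)).mono_set ball_subset_closedBall

lemma measurable_gnorm {n : ℕ} (u : En n → ℝ) : Measurable (gnorm u) := (measurable_fderiv ℝ u).norm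

lemma gnorm_nonneg {n : ℕ} (u : En n → ℝ) (x : En n) : 0 ≤ gnorm u x := norm_nonneg _

lemma gnorm_le {n : ℕ} {u : En n → ℝ} {K : NNReal} (hu : LipschitzWith K u) (x : En n) :
    gnorm u x ≤ K := norm_fderiv_le_of_lipschitz ℝ hu

lemma integrableOn_gnorm {n : ℕ} {u : En n → ℝ} {K : NNReal} (hu : LipschitzWith K u) (z : En n)
    (ρ : ℝ) : IntegrableOn (gnorm u) (ball z ρ) := by
  refine Measure.integrableOn_of_bounded (M := K) measure_ball_lt_top.ne
    (measurable_gnorm u).aestronglyMeasurable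
      (Filter.Eventually.of_forall fun x => ?_)
  rw [Real.norm_of_nonneg (gnorm_nonneg u x)]
  exact gnorm_le hu x

lemma enorm_fderiv_eq {n : ℕ} (u : En n → ℝ) (x : En n) :
    ‖fderiv ℝ u x‖ₑ = ENNReal.ofReal (gnorm u x) := (ofReal_norm _).symm

/-- The `(1,1)`-Poincaré inequality on balls. -/
lemma poincare_ball {n : ℕ} {u : En n → ℝ} {K : NNReal} (hu : LipschitzWith K u)
    (z : En n) {ρ : ℝ} (hρ : 0 < ρ) :
    ∫ x in ball z ρ, |u x - ⨍ y in ball z ρ, u y|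
      ≤ 2 ^ (n + 1) * ρ * ∫ x in ball z ρ, gnorm u x := by
  set B := ball z ρ with hB
  have huc := hu.continuous
  have hV : 0 < volume.real B := volume_ball_pos z hρ
  have hVt : volume B ≠ ⊤ := measure_ball_lt_top.ne
  have hV0 : volume B ≠ 0 := (measure_ball_pos _ _ hρ).ne'
  have : IsFiniteMeasure (volume.restrict B) := isFiniteMeasure_restrict.2 hVt
  have h_int : IntegrableOn u B := continuous_integrableOn_ball huc z ρ
  have hpt : ∀ x, ‖u x - ⨍ y in B, u y‖ₑ ≤ (volume B)⁻¹ * ∫⁻ y in B, ‖u y - u x‖ₑ := by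
    intro x
    have h1 : u x - ⨍ y in B, u y = (volume.real B)⁻¹ • ∫ y in B, (u x - u y) := by
      rw [integral_sub (integrable_const _) h_int, setAverage_eq, setIntegral_const, smul_sub,
        smul_smul, inv_mul_cancel₀ hV.ne', one_smul]
    rw [h1, enorm_smul]
    gcongr
    · rw [Real.enorm_eq_ofReal (by positivity), ENNReal.ofReal_inv_of_pos hV,
        ofReal_measureReal hVt]
    · refine (enorm_integral_le_lintegral_enorm _).trans (le_of_eq (lintegral_congr fun y => ?_))
      exact enorm_sub_rev _ _
  have hmain : ∫⁻ x in B, ‖u x - ⨍ y in B, u y‖ₑ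
      ≤ ENNReal.ofReal (2 ^ (n + 1) * ρ * ∫ x in B, gnorm u x) := by
    calc ∫⁻ x in B, ‖u x - ⨍ y in B, u y‖ₑ
        ≤ ∫⁻ x in B, (volume B)⁻¹ * ∫⁻ y in B, ‖u y - u x‖ₑ := lintegral_mono hpt
      _ = (volume B)⁻¹ * ∫⁻ x in B, ∫⁻ y in B, ‖u y - u x‖ₑ :=
          lintegral_const_mul' _ _ (ENNReal.inv_ne_top.2 hV0)
      _ ≤ (volume B)⁻¹ * (ENNReal.ofReal (2 * ρ) * (∫⁻ x in B, ‖fderiv ℝ u x‖ₑ)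
            * volume (ball (0 : En n) (2 * ρ))) := by
          gcongr
          exact lintegral_lintegral_sub_le hu z ρ
      _ = _ := by
          rw [← ofReal_measureReal (measure_ball_lt_top (x := (0 : En n)) (r := 2 * ρ)).ne,
            volume_real_ball_mul 0 z two_pos, ← hB,
            show ∫⁻ x in B, ‖fderiv ℝ u x‖ₑ = ENNReal.ofReal (∫ x in B, gnorm u x) by
              rw [ofReal_integral_eq_lintegral_ofReal (integrableOn_gnorm hu z ρ)
                (Filter.Eventually.of_forall (gnorm_nonneg u))]
              simp_rw [enorm_fderiv_eq]
              rfl,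
            ← ofReal_measureReal hVt, ← ENNReal.ofReal_inv_of_pos hV,
            ← ENNReal.ofReal_mul (by positivity), ← ENNReal.ofReal_mul
              (mul_nonneg (by positivity) (integral_nonneg (gnorm_nonneg u))),
            ← ENNReal.ofReal_mul (by positivity)]
          congr 1
          field_simp
          ring
  have hI : IntegrableOn (fun x => u x - ⨍ y in B, u y) B := h_int.sub (integrable_const _)
  rw [← ofReal_integral_norm_eq_lintegral_enorm hI] at hmain
  exact (ENNReal.ofReal_le_ofReal_iff (mul_nonneg (by positivity)
    (integral_nonneg (gnorm_nonneg u)))).1 hmain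

/-- Superlevel set of the uncentered maximal function of `|∇u|` over balls of radius at most `1`. -/
def maxSet {n : ℕ} (u : En n → ℝ) (t : ℝ) : Set (En n) :=
  {x | ∃ y r, 0 < r ∧ r ≤ 1 ∧ x ∈ ball y r ∧
    t * volume.real (ball y r) < ∫ w in ball y r, gnorm u w}

lemma integral_le_of_notMem_maxSet {n : ℕ} {u : En n → ℝ} {t : ℝ} {x : En n}
    (hx : x ∉ maxSet u t) {y : En n} {r : ℝ} (hr : 0 < r) (hr1 : r ≤ 1) (hxy : x ∈ ball y r) :
    ∫ w in ball y r, gnorm u w ≤ t * volume.real (ball y r) := by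
  by_contra! h
  exact hx ⟨y, r, hr, hr1, hxy, h⟩

lemma average_sub_le {n : ℕ} {u : En n → ℝ} (hu : Continuous u) (y : En n) {r : ℝ} (hr : 0 < r)
    (m : ℝ) : |(⨍ w in ball y r, u w) - m| ≤
      (volume.real (ball y r))⁻¹ * ∫ w in ball y r, |u w - m| := by
  have hV := volume_ball_pos y hr
  have : IsFiniteMeasure (volume.restrict (ball y r)) :=
    isFiniteMeasure_restrict.2 measure_ball_lt_top.ne
  have h1 : (⨍ w in ball y r, u w) - m =
      (volume.real (ball y r))⁻¹ • ∫ w in ball y r, (u w - m) := by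
    rw [integral_sub (continuous_integrableOn_ball hu y r) (integrable_const _), setAverage_eq,
      setIntegral_const, smul_sub, smul_smul, inv_mul_cancel₀ hV.ne', one_smul]
  rw [h1, smul_eq_mul, abs_mul, abs_of_pos (inv_pos.2 hV)]
  gcongr
  exact abs_integral_le_integral_abs

lemma abs_average_sub_average_le {n : ℕ} {u : En n → ℝ} {K : NNReal} (hu : LipschitzWith K u)
    {x y : En n} {r t : ℝ} (hr : 0 < r) (hsub : ball y r ⊆ ball x (2 * r))
    (ht : ∫ w in ball x (2 * r), gnorm u w ≤ t * volume.real (ball x (2 * r))) :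
    |(⨍ w in ball y r, u w) - ⨍ w in ball x (2 * r), u w| ≤ 4 ^ (n + 1) * r * t := by
  have hV := volume_ball_pos y hr
  set m := ⨍ w in ball x (2 * r), u w
  have : IsFiniteMeasure (volume.restrict (ball x (2 * r))) :=
    isFiniteMeasure_restrict.2 measure_ball_lt_top.ne
  have hi : IntegrableOn (fun w => |u w - m|) (ball x (2 * r)) :=
    ((continuous_integrableOn_ball hu.continuous x (2 * r)).sub (integrable_const _)).abs
  calc |(⨍ w in ball y r, u w) - m|
      ≤ (volume.real (ball y r))⁻¹ * ∫ w in ball y r, |u w - m| :=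
        average_sub_le hu.continuous y hr m
    _ ≤ (volume.real (ball y r))⁻¹ * ∫ w in ball x (2 * r), |u w - m| := by
        refine mul_le_mul_of_nonneg_left ?_ (inv_nonneg.2 hV.le)
        exact setIntegral_mono_set hi (Filter.Eventually.of_forall fun _ => abs_nonneg _)
          hsub.eventuallyLE
    _ ≤ (volume.real (ball y r))⁻¹ * (2 ^ (n + 1) * (2 * r) *
          (t * volume.real (ball x (2 * r)))) := by
        gcongr
        refine (poincare_ball hu x (by positivity)).trans ?_
        gcongr
    _ = 4 ^ (n + 1) * r * t := by
        rw [volume_real_ball_mul x y two_pos]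
        field_simp
        rw [show (4 : ℝ) = 2 * 2 by norm_num, mul_pow]
        ring

lemma abs_average_sub_self_le {n : ℕ} {u : En n → ℝ} {K : NNReal} (hu : LipschitzWith K u)
    (x : En n) {r : ℝ} (hr : 0 < r) : |(⨍ w in ball x r, u w) - u x| ≤ K * r := by
  refine (average_sub_le hu.continuous x hr _).trans ?_
  have hV := volume_ball_pos x hr
  have : IsFiniteMeasure (volume.restrict (ball x r)) :=
    isFiniteMeasure_restrict.2 measure_ball_lt_top.ne
  rw [inv_mul_le_iff₀ hV]
  calc ∫ w in ball x r, |u w - u x| ≤ ∫ _w in ball x r, K * r := by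
        refine setIntegral_mono_on ?_ (integrable_const _) measurableSet_ball fun w hw => ?_
        · exact ((continuous_integrableOn_ball hu.continuous x r).sub (integrable_const _)).abs
        · refine (hu.dist_le_mul w x).trans ?_
          gcongr
          exact (mem_ball.1 hw).le
    _ = _ := by rw [setIntegral_const, smul_eq_mul]

lemma abs_sub_average_le_of_notMem {n : ℕ} {u : En n → ℝ} {K : NNReal} (hu : LipschitzWith K u)
    {x y : En n} {r t : ℝ} (hr : 0 < r) (hr1 : 2 * r ≤ 1) (hxy : dist x y ≤ r)
    (hx : x ∉ maxSet u t) :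
    |u x - ⨍ w in ball y r, u w| ≤ 3 * 4 ^ (n + 1) * r * t := by
  set a : ℕ → ℝ := fun m => ⨍ w in ball x (2 * r / 2 ^ m), u w with ha
  have hpos : ∀ m : ℕ, 0 < 2 * r / 2 ^ m := fun m => by positivity
  have hle : ∀ m : ℕ, 2 * r / 2 ^ m ≤ 1 := fun m =>
    (div_le_self (by positivity) (one_le_pow₀ one_le_two)).trans hr1
  have hstep : ∀ m, dist (a m) (a (m + 1)) ≤ 2 * 4 ^ (n + 1) * r * t / 2 / 2 ^ m := by
    intro m
    have hrad : 2 * r / 2 ^ m = 2 * (2 * r / 2 ^ (m + 1)) := by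
      rw [pow_succ]; field_simp
    have := abs_average_sub_average_le (x := x) (y := x) (t := t) hu (hpos (m + 1))
      (ball_subset_ball (by linarith [hpos (m + 1)]))
      (by
        rw [← hrad]
        exact integral_le_of_notMem_maxSet hx (hpos m) (hle m) (mem_ball_self (hpos m)))
    rw [← hrad] at this
    rw [dist_comm, Real.dist_eq]
    refine this.trans (le_of_eq ?_)
    rw [pow_succ 2 m]; field_simp
  have hlim : Filter.Tendsto a Filter.atTop (nhds (u x)) := by
    rw [tendsto_iff_dist_tendsto_zero]
    refine squeeze_zero (fun _ => dist_nonneg) (fun m => abs_average_sub_self_le hu x (hpos m)) ?_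
    have h := (tendsto_pow_atTop_nhds_zero_of_lt_one (r := (1 / 2 : ℝ)) (by norm_num)
      (by norm_num)).const_mul (K * (2 * r))
    rw [mul_zero] at h
    refine h.congr fun m => ?_
    rw [div_pow, one_pow]; ring
  have h0 := dist_le_of_le_geometric_two_of_tendsto₀ hstep hlim
  have h1 := abs_average_sub_average_le (x := x) (y := y) (t := t) hu hr
    (ball_subset_ball' (by rw [dist_comm]; linarith))
    (integral_le_of_notMem_maxSet hx (by positivity) hr1 (mem_ball_self (by positivity)))
  have ha0 : a 0 = ⨍ w in ball x (2 * r), u w := by simp [ha]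
  rw [ha0, Real.dist_eq] at h0
  rw [abs_le] at *
  constructor <;> linarith [h0.1, h0.2, h1.1, h1.2]

lemma abs_sub_le_of_notMem_maxSet {n : ℕ} {u : En n → ℝ} {K : NNReal} (hu : LipschitzWith K u)
    {x y : En n} {t : ℝ} (hxy : 2 * dist x y ≤ 1) (hx : x ∉ maxSet u t) (hy : y ∉ maxSet u t) :
    |u x - u y| ≤ 6 * 4 ^ (n + 1) * t * dist x y := by
  rcases (dist_nonneg (x := x) (y := y)).eq_or_lt with h | h
  · simp [dist_eq_zero.1 h.symm]
  · have h1 := abs_sub_average_le_of_notMem hu h hxy le_rfl hx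
    have h2 := abs_sub_average_le_of_notMem (y := y) hu h hxy (by simp [h.le]) hy
    rw [abs_le] at *
    constructor <;> linarith [h1.1, h1.2, h2.1, h2.2]

lemma le_of_notMem_maxSet {n : ℕ} {f : En n → ℝ} {K : NNReal} (hf : LipschitzWith K f)
    {x z : En n} {t : ℝ} (hxz : 0 < dist x z) (hxz1 : 4 * dist x z ≤ 1) (hx : x ∉ maxSet f t)
    (hz : ∫ w in ball z (2 * dist x z), f w
      ≤ t * (2 * dist x z) * volume.real (ball z (2 * dist x z))) :
    f x ≤ (6 * 4 ^ (n + 1) + 2) * t * dist x z := by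
  have h1 := abs_sub_average_le_of_notMem (y := z) (r := 2 * dist x z) hf (by linarith)
    (by linarith) (by linarith) hx
  have hV := volume_ball_pos z (ρ := 2 * dist x z) (by linarith)
  have h2 : ⨍ w in ball z (2 * dist x z), f w ≤ t * (2 * dist x z) := by
    rw [setAverage_eq, smul_eq_mul, inv_mul_le_iff₀ hV]
    linarith
  linarith [(abs_le.1 h1).2]

/-- A Vitali covering estimate. -/
lemma volume_le_of_ball_cover {n : ℕ} (ν : Measure (En n)) (S : Set (En n)) (R : ℝ)
    (hS : ∀ x ∈ S, ∃ y r, 0 < r ∧ r ≤ R ∧ x ∈ ball y r ∧ volume (ball y r) ≤ ν (ball y r)) :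
    volume S ≤ ENNReal.ofReal (5 ^ n) * ν univ := by
  set T : Set (En n × ℝ) :=
    {b | 0 < b.2 ∧ b.2 ≤ R ∧ volume (ball b.1 b.2) ≤ ν (ball b.1 b.2)} with hT
  obtain ⟨U, hUT, hdisj, hcov⟩ := Vitali.exists_disjoint_subfamily_covering_enlargement_closedBall
    T (fun b => b.1) (fun b => b.2) R (fun b hb => hb.2.1) 5 (by norm_num)
  have hUc : U.Countable := by
    refine hdisj.countable_of_nonempty_interior fun b hb => ?_
    exact ⟨b.1, ball_subset_interior_closedBall (mem_ball_self (hUT hb).1)⟩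
  have hdisj' : U.PairwiseDisjoint fun b => ball b.1 b.2 :=
    hdisj.mono fun b => ball_subset_closedBall
  calc volume S ≤ volume (⋃ b ∈ U, closedBall b.1 (5 * b.2)) := by
        refine measure_mono fun x hx => ?_
        obtain ⟨y, r, hr, hrR, hxy, hν⟩ := hS x hx
        obtain ⟨b, hb, hsub⟩ := hcov (y, r) ⟨hr, hrR, hν⟩
        exact mem_biUnion hb (hsub (ball_subset_closedBall hxy))
    _ ≤ ∑' b : U, volume (closedBall b.1.1 (5 * b.1.2)) := measure_biUnion_le _ hUc _
    _ ≤ ∑' b : U, ENNReal.ofReal (5 ^ n) * ν (ball b.1.1 b.1.2) := by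
        refine ENNReal.tsum_le_tsum fun b => ?_
        have hb := hUT b.2
        refine le_trans (le_of_eq ?_) (mul_le_mul_right hb.2.2 _)
        rw [Measure.addHaar_closedBall volume _ (by linarith [hb.1]), mul_pow,
          ENNReal.ofReal_mul (by positivity), mul_assoc, Measure.addHaar_ball_of_pos volume _ hb.1,
          finrank_euclideanSpace_fin]
    _ = ENNReal.ofReal (5 ^ n) * ν (⋃ b ∈ U, ball b.1 b.2) := by
        rw [ENNReal.tsum_mul_left, measure_biUnion hUc hdisj' fun _ _ => measurableSet_ball]
    _ ≤ _ := by gcongr; exact subset_univ _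

/-- Weak type estimate for the maximal function. -/
lemma volume_maxSet_le {n : ℕ} {f : En n → ℝ} {K : NNReal} (hf : LipschitzWith K f) {t : ℝ}
    (ht : 0 < t) :
    volume (maxSet f t) ≤ ENNReal.ofReal (5 ^ n) * (ENNReal.ofReal (2 / t) *
      ∫⁻ x in {x | t / 2 < gnorm f x}, ENNReal.ofReal (gnorm f x)) := by
  set G : Set (En n) := {x | t / 2 < gnorm f x} with hG
  have hGm : MeasurableSet G := measurableSet_lt measurable_const (measurable_gnorm f)
  set ν : Measure (En n) := ENNReal.ofReal (2 / t) •
    (volume.restrict G).withDensity fun x => ENNReal.ofReal (gnorm f x) with hν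
  have hmain := volume_le_of_ball_cover ν (maxSet f t) 1 ?_
  · refine hmain.trans (le_of_eq ?_)
    rw [hν, Measure.smul_apply, withDensity_apply _ MeasurableSet.univ, Measure.restrict_univ,
      smul_eq_mul]
  rintro x ⟨y, r, hr, hr1, hxy, hlt⟩
  refine ⟨y, r, hr, hr1, hxy, ?_⟩
  have hvt : volume (ball y r) ≠ ⊤ := measure_ball_lt_top.ne
  rw [hν, Measure.smul_apply, withDensity_apply _ measurableSet_ball,
    Measure.restrict_restrict measurableSet_ball, smul_eq_mul]
  have h1 : ENNReal.ofReal t * volume (ball y r)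
      ≤ ∫⁻ w in ball y r, ENNReal.ofReal (gnorm f w) := by
    rw [← ofReal_integral_eq_lintegral_ofReal (integrableOn_gnorm hf y r)
      (Filter.Eventually.of_forall (gnorm_nonneg f)), ← ofReal_measureReal hvt,
      ← ENNReal.ofReal_mul ht.le]
    exact ENNReal.ofReal_le_ofReal hlt.le
  have h2 : ∫⁻ w in ball y r, ENNReal.ofReal (gnorm f w)
      ≤ ENNReal.ofReal (t / 2) * volume (ball y r)
        + ∫⁻ w in ball y r ∩ G, ENNReal.ofReal (gnorm f w) := by
    calc ∫⁻ w in ball y r, ENNReal.ofReal (gnorm f w)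
        ≤ ∫⁻ w in ball y r, (ENNReal.ofReal (t / 2)
            + G.indicator (fun w => ENNReal.ofReal (gnorm f w)) w) := by
          refine lintegral_mono fun w => ?_
          by_cases hw : w ∈ G
          · rw [indicator_of_mem hw]; exact le_add_self
          · rw [indicator_of_notMem hw, add_zero]
            exact ENNReal.ofReal_le_ofReal (not_lt.1 hw)
      _ = _ := by
          rw [lintegral_add_left measurable_const, setLIntegral_const, setLIntegral_indicator hGm,
            inter_comm]
  have h3 : ENNReal.ofReal (t / 2) * volume (ball y r)
      ≤ ∫⁻ w in ball y r ∩ G, ENNReal.ofReal (gnorm f w) := by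
    have h4 := h1.trans h2
    rw [show ENNReal.ofReal t = ENNReal.ofReal (t / 2) + ENNReal.ofReal (t / 2) by
      rw [← ENNReal.ofReal_add (by positivity) (by positivity), add_halves], add_mul] at h4
    exact (ENNReal.add_le_add_iff_left (ENNReal.mul_ne_top ENNReal.ofReal_ne_top hvt)).1 h4
  calc volume (ball y r)
      = ENNReal.ofReal (2 / t) * (ENNReal.ofReal (t / 2) * volume (ball y r)) := by
        rw [← mul_assoc, ← ENNReal.ofReal_mul (by positivity),
          div_mul_div_cancel₀ ht.ne', div_self two_ne_zero, ENNReal.ofReal_one, one_mul]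
    _ ≤ _ := by gcongr

lemma sum_geometric_below_le {σ X : ℝ} (hσ : 0 < σ) (hX : 0 ≤ X) (N : ℕ) :
    ∑ i ∈ Finset.range N, (if (2 : ℝ) ^ i < X then ((2 : ℝ) ^ σ) ^ i else 0)
      ≤ 2 ^ σ / (2 ^ σ - 1) * X ^ σ := by
  set b : ℝ := 2 ^ σ with hb
  have hb1 : 1 < b := Real.one_lt_rpow one_lt_two hσ
  have hX' : 0 ≤ X ^ σ := Real.rpow_nonneg hX σ
  have hb0 : 0 < b - 1 := by linarith
  induction N with
  | zero => simp; positivity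
  | succ N ih =>
    by_cases h : (2 : ℝ) ^ N < X
    · have hbN : b ^ N ≤ X ^ σ := by
        rw [hb, ← Real.rpow_natCast, ← Real.rpow_mul zero_le_two, mul_comm,
          Real.rpow_mul zero_le_two, Real.rpow_natCast]
        exact Real.rpow_le_rpow (by positivity) h.le hσ.le
      calc ∑ i ∈ Finset.range (N + 1), (if (2 : ℝ) ^ i < X then b ^ i else 0)
          ≤ ∑ i ∈ Finset.range (N + 1), b ^ i := by
            refine Finset.sum_le_sum fun i _ => ?_
            split_ifs
            · rfl
            · positivity
        _ = (b ^ (N + 1) - 1) / (b - 1) := geom_sum_eq hb1.ne' _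
        _ ≤ b * b ^ N / (b - 1) := by
            gcongr
            rw [pow_succ]; linarith
        _ ≤ b * X ^ σ / (b - 1) := by gcongr
        _ = _ := by ring
    · rw [Finset.sum_range_succ, if_neg h, add_zero]
      exact ih

/-- Discrete strong type estimate for the maximal function. -/
lemma tsum_volume_maxSet_le {n : ℕ} {f : En n → ℝ} {K : NNReal} (hf : LipschitzWith K f)
    {s τ : ℝ} (hs : 1 < s) (hτ : 0 < τ) :
    ∑' i : ℕ, ENNReal.ofReal (((2 : ℝ) ^ s) ^ i) * volume (maxSet f (τ * 2 ^ i))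
      ≤ ENNReal.ofReal (5 ^ n * (2 / τ) * (2 ^ (s - 1) / (2 ^ (s - 1) - 1) * (2 / τ) ^ (s - 1)))
        * ∫⁻ x, ENNReal.ofReal (gnorm f x ^ s) := by
  have hb1 : 1 < (2 : ℝ) ^ (s - 1) := Real.one_lt_rpow one_lt_two (by linarith)
  have hb0 : 0 < (2 : ℝ) ^ (s - 1) - 1 := by linarith
  set c : ℕ → ℝ → ℝ := fun i y => if (2 : ℝ) ^ i < 2 / τ * y then ((2 : ℝ) ^ (s - 1)) ^ i else 0
    with hc
  have hcm : ∀ i, Measurable fun x => ENNReal.ofReal (c i (gnorm f x) * gnorm f x) := by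
    intro i
    refine Measurable.ennreal_ofReal (Measurable.mul ?_ (measurable_gnorm f))
    exact Measurable.ite (measurableSet_lt measurable_const ((measurable_gnorm f).const_mul _))
      measurable_const measurable_const
  have hterm : ∀ i : ℕ, ENNReal.ofReal (((2 : ℝ) ^ s) ^ i) * volume (maxSet f (τ * 2 ^ i))
      ≤ ENNReal.ofReal (5 ^ n * (2 / τ)) * ∫⁻ x, ENNReal.ofReal (c i (gnorm f x) * gnorm f x) := by
    intro i
    have hGm : MeasurableSet {x | τ * 2 ^ i / 2 < gnorm f x} :=
      measurableSet_lt measurable_const (measurable_gnorm f)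
    have hpow : ((2 : ℝ) ^ s) ^ i = ((2 : ℝ) ^ (s - 1)) ^ i * 2 ^ i := by
      rw [← mul_pow, Real.rpow_sub_one two_ne_zero, div_mul_cancel₀ _ two_ne_zero]
    calc ENNReal.ofReal (((2 : ℝ) ^ s) ^ i) * volume (maxSet f (τ * 2 ^ i))
        ≤ ENNReal.ofReal (((2 : ℝ) ^ s) ^ i) * (ENNReal.ofReal (5 ^ n) *
            (ENNReal.ofReal (2 / (τ * 2 ^ i)) *
            ∫⁻ x in {x | τ * 2 ^ i / 2 < gnorm f x}, ENNReal.ofReal (gnorm f x))) := by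
          gcongr
          exact volume_maxSet_le hf (by positivity)
      _ = ENNReal.ofReal (5 ^ n * (2 / τ)) * (ENNReal.ofReal (((2 : ℝ) ^ (s - 1)) ^ i) *
            ∫⁻ x in {x | τ * 2 ^ i / 2 < gnorm f x}, ENNReal.ofReal (gnorm f x)) := by
          rw [← mul_assoc, ← mul_assoc, ← mul_assoc, ← ENNReal.ofReal_mul (by positivity),
            ← ENNReal.ofReal_mul (by positivity), ← ENNReal.ofReal_mul (by positivity)]
          congr 2
          rw [hpow]
          field_simp
      _ = _ := by
          rw [← lintegral_const_mul _ (measurable_gnorm f).ennreal_ofReal,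
            ← lintegral_indicator hGm]
          congr 2
          ext x
          have hiff : τ * 2 ^ i / 2 < gnorm f x ↔ (2 : ℝ) ^ i < 2 / τ * gnorm f x := by
            rw [div_lt_iff₀ two_pos, div_mul_eq_mul_div, lt_div_iff₀ hτ]
            constructor <;> intro h <;> linarith
          by_cases hx : τ * 2 ^ i / 2 < gnorm f x
          · rw [indicator_of_mem (show x ∈ {x | τ * 2 ^ i / 2 < gnorm f x} from hx), hc]
            simp only
            rw [if_pos (hiff.1 hx), ENNReal.ofReal_mul (by positivity)]
          · rw [indicator_of_notMem (show x ∉ {x | τ * 2 ^ i / 2 < gnorm f x} from hx), hc]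
            simp only
            rw [if_neg (hiff.not.1 hx), zero_mul, ENNReal.ofReal_zero]
  refine (ENNReal.tsum_le_tsum hterm).trans ?_
  rw [ENNReal.tsum_mul_left, ← lintegral_tsum fun i => (hcm i).aemeasurable,
    ENNReal.ofReal_mul (p := 5 ^ n * (2 / τ)) (by positivity), mul_assoc]
  gcongr
  rw [← lintegral_const_mul _ ((measurable_gnorm f).pow_const s).ennreal_ofReal]
  refine lintegral_mono fun x => ENNReal.tsum_le_of_sum_range_le fun N => ?_
  have hg := gnorm_nonneg f x
  rw [← ENNReal.ofReal_sum_of_nonneg, ← ENNReal.ofReal_mul (by positivity), ← Finset.sum_mul]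
  · refine ENNReal.ofReal_le_ofReal ?_
    have h := sum_geometric_below_le (σ := s - 1) (X := 2 / τ * gnorm f x) (by linarith)
      (by positivity) N
    calc _ ≤ 2 ^ (s - 1) / (2 ^ (s - 1) - 1) * (2 / τ * gnorm f x) ^ (s - 1) * gnorm f x := by
          gcongr
      _ = _ := by
          rw [Real.mul_rpow (by positivity) hg]
          have : gnorm f x ^ s = gnorm f x ^ (s - 1) * gnorm f x := by
            rcases hg.eq_or_lt with h0 | h0
            · rw [← h0, Real.zero_rpow (by linarith), mul_zero]
            · rw [Real.rpow_sub_one h0.ne', div_mul_cancel₀ _ h0.ne']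
          rw [this]
          ring
  · intro i _
    refine mul_nonneg ?_ hg
    simp only [hc]
    split_ifs <;> positivity

/-- The gradients of two Lipschitz functions agree almost everywhere on a set where the
functions agree. -/
lemma ae_gnorm_eq_of_eqOn {n : ℕ} (hn : 0 < n) {f g : En n → ℝ} {K L : NNReal}
    (hf : LipschitzWith K f) (hg : LipschitzWith L g) {S : Set (En n)} (hS : MeasurableSet S)
    (hfg : EqOn f g S) : ∀ᵐ x, x ∈ S → gnorm f x = gnorm g x := by
  have : Nonempty (Fin n) := ⟨⟨0, hn⟩⟩
  obtain ⟨e, he⟩ := exists_norm_eq (En n) (zero_le_one (α := ℝ))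
  have hd : ∀ᵐ x, DifferentiableAt ℝ f x ∧ DifferentiableAt ℝ g x :=
    (hf.ae_differentiableAt).and hg.ae_differentiableAt
  set N : Set (En n) := {x | DifferentiableAt ℝ f x} ∩ {x | DifferentiableAt ℝ g x}
  have hN : MeasurableSet N :=
    (measurableSet_of_differentiableAt ℝ f).inter (measurableSet_of_differentiableAt ℝ g)
  have happ : ApproximatesLinearOn (fun x => (f x - g x) • e) (0 : En n →L[ℝ] En n) (S ∩ N) 0 := by
    intro x hx y hy
    simp [hfg hx.1, hfg hy.1]
  have key := happ.norm_fderiv_sub_le volume (hS.inter hN)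
    (fun x => (fderiv ℝ f x - fderiv ℝ g x).smulRight e) fun x hx =>
      ((hx.2.1.hasFDerivAt.sub hx.2.2.hasFDerivAt).smul_const e).hasFDerivWithinAt
  rw [ae_restrict_iff' (hS.inter hN)] at key
  filter_upwards [key, hd] with x hx hdx hxS
  have h1 := hx ⟨hxS, hdx⟩
  rw [sub_zero, nonpos_iff_eq_zero, nnnorm_eq_zero] at h1
  have h2 : fderiv ℝ f x - fderiv ℝ g x = 0 := by
    ext w
    have h3 : ((fderiv ℝ f x - fderiv ℝ g x).smulRight e) w = 0 := by rw [h1]; rfl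
    rw [ContinuousLinearMap.smulRight_apply, smul_eq_zero] at h3
    exact h3.resolve_right (norm_pos_iff.1 (he ▸ one_pos))
  rw [gnorm, gnorm, sub_eq_zero.1 h2]

lemma exists_lipschitz_truncation {n : ℕ} (hn : 0 < n) {f : En n → ℝ} {K : NNReal}
    (hf : LipschitzWith K f) (hf0 : ∀ x, 0 ≤ f x) {S Z : Set (En n)} (hS : MeasurableSet S)
    {m : ℝ} (hm : 0 ≤ m)
    (hfS : ∀ x ∈ S ∪ Z, ∀ y ∈ S ∪ Z, |f x - f y| ≤ m * dist x y) :
    ∃ g : En n → ℝ, LipschitzWith m.toNNReal g ∧ (∀ x, 0 ≤ g x) ∧ (∀ x ∈ S ∪ Z, g x = f x) ∧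
      ∀ᵐ x, gnorm g x ≤ Sᶜ.indicator (fun _ => m) x + min (gnorm f x) m := by
  have hlip : LipschitzOnWith m.toNNReal f (S ∪ Z) := by
    refine LipschitzOnWith.of_dist_le_mul fun x hx y hy => ?_
    rw [Real.coe_toNNReal _ hm]
    exact hfS x hx y hy
  obtain ⟨g, hg, hgf⟩ := hlip.extend_real
  have hg' : LipschitzWith m.toNNReal fun x => max (g x) 0 := hg.max_const 0
  have heq : ∀ x ∈ S ∪ Z, max (g x) 0 = f x := fun x hx => by
    rw [← hgf hx, max_eq_left (hf0 x)]
  refine ⟨fun x => max (g x) 0, hg', fun x => le_max_right _ _, heq, ?_⟩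
  filter_upwards [ae_gnorm_eq_of_eqOn hn hg' hf hS fun x hx => heq x (Or.inl hx)] with x hx
  have hle := gnorm_le hg' x
  rw [Real.coe_toNNReal _ hm] at hle
  by_cases hxS : x ∈ S
  · rw [indicator_of_notMem (by simpa using hxS), zero_add, ← hx hxS]
    exact le_min le_rfl hle
  · rw [indicator_of_mem (by simpa using hxS)]
    have := le_min (gnorm_nonneg f x) hm
    linarith

lemma sum_two_pow_rpow_le (s : Finset ℕ) {p : ℝ} (hp : 0 < p) :
    (∑ j ∈ s, (2 : ℝ) ^ j) ^ p ≤ 2 ^ p * ∑ j ∈ s, ((2 : ℝ) ^ p) ^ j := by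
  rcases s.eq_empty_or_nonempty with rfl | hs
  · simp [Real.zero_rpow hp.ne']
  · set N := s.max' hs
    have h1 : ∑ j ∈ s, 2 ^ j < 2 ^ (N + 1) :=
      Nat.geomSum_lt le_rfl fun k hk => Nat.lt_succ_of_le (s.le_max' k hk)
    have h2 : ∑ j ∈ s, (2 : ℝ) ^ j ≤ 2 * 2 ^ N := by
      rw [← pow_succ']; exact_mod_cast h1.le
    calc (∑ j ∈ s, (2 : ℝ) ^ j) ^ p ≤ (2 * 2 ^ N) ^ p := by
          refine Real.rpow_le_rpow (by positivity) h2 hp.le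
      _ = 2 ^ p * ((2 : ℝ) ^ p) ^ N := by
          rw [Real.mul_rpow two_pos.le (by positivity), ← Real.rpow_natCast, ← Real.rpow_natCast,
            ← Real.rpow_mul two_pos.le, ← Real.rpow_mul two_pos.le, mul_comm p]
      _ ≤ _ := by
          gcongr
          exact Finset.single_le_sum (f := fun j => ((2 : ℝ) ^ p) ^ j)
            (fun j _ => by positivity) (s.max'_mem hs)

lemma add_add_rpow_le {a b c p : ℝ} (ha : 0 ≤ a) (hb : 0 ≤ b) (hc : 0 ≤ c) (hp : 0 < p) :
    (a + b + c) ^ p ≤ 3 ^ p * (a ^ p + b ^ p + c ^ p) := by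
  have h : ∀ d, 0 ≤ d → a ≤ d → b ≤ d → c ≤ d → d ^ p ≤ a ^ p + b ^ p + c ^ p →
      (a + b + c) ^ p ≤ 3 ^ p * (a ^ p + b ^ p + c ^ p) := by
    intro d hd h1 h2 h3 h4
    calc (a + b + c) ^ p ≤ (3 * d) ^ p := Real.rpow_le_rpow (by positivity) (by linarith) hp.le
      _ = 3 ^ p * d ^ p := Real.mul_rpow (by norm_num) hd
      _ ≤ _ := by gcongr
  have ha' := Real.rpow_nonneg ha p
  have hb' := Real.rpow_nonneg hb p
  have hc' := Real.rpow_nonneg hc p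
  rcases le_total a b with hab | hab <;> rcases le_total b c with hbc | hbc
  · exact h c hc (hab.trans hbc) hbc le_rfl (by linarith)
  · exact h b hb hab le_rfl hbc (by linarith)
  · rcases le_total a c with hac | hac
    · exact h c hc hac hbc le_rfl (by linarith)
    · exact h a ha le_rfl hab hac (by linarith)
  · exact h a ha le_rfl hab (hbc.trans hab) (by linarith)

lemma gnorm_cutoff_le {n : ℕ} {h : En n → ℝ} {K : NNReal} (hh : LipschitzWith K h) (z : En n)
    {ρ θ : ℝ} (hρ : 0 < ρ) (hθ : 0 < θ) :
    ∀ᵐ x, gnorm (fun x => max (2 - 2 / ρ * dist x z - h x / θ) 0) x = 0 ∨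
      (h x < 2 * θ ∧ gnorm (fun x => max (2 - 2 / ρ * dist x z - h x / θ) 0) x
        ≤ 2 / ρ + gnorm h x / θ) := by
  have hdl : LipschitzWith 1 fun x : En n => dist x z := LipschitzWith.dist_left z
  filter_upwards [hh.ae_differentiableAt, hdl.ae_differentiableAt] with x hhx hdx
  set v : En n → ℝ := fun x => max (2 - 2 / ρ * dist x z - h x / θ) 0 with hv
  rcases le_or_gt (2 - 2 / ρ * dist x z - h x / θ) 0 with h0 | h0
  · left
    have hvx : v x = 0 := max_eq_right h0
    have hmin : IsLocalMin v x :=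
      Filter.Eventually.of_forall fun y => by rw [hvx]; exact le_max_right _ _
    rw [gnorm, hmin.fderiv_eq_zero, norm_zero]
  · right
    constructor
    · have h1 : 0 ≤ 2 / ρ * dist x z := by positivity
      rw [← div_lt_iff₀ hθ]; linarith
    · have hcont : Continuous fun x => 2 - 2 / ρ * dist x z - h x / θ := by
        have := hh.continuous
        fun_prop
      have heq : v =ᶠ[nhds x] fun x => 2 - 2 / ρ * dist x z - h x / θ := by
        filter_upwards [hcont.continuousAt.eventually (lt_mem_nhds h0)] with y hy
        exact max_eq_left hy.le
      have hD : HasFDerivAt (fun x => 2 - 2 / ρ * dist x z - h x / θ)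
          (-((2 / ρ) • fderiv ℝ (fun x : En n => dist x z) x) - θ⁻¹ • fderiv ℝ h x) x := by
        have h2 := ((hdx.hasFDerivAt.const_mul (2 / ρ)).const_sub 2).sub
          (hhx.hasFDerivAt.const_mul θ⁻¹)
        refine h2.congr_of_eventuallyEq (Filter.Eventually.of_forall fun y => ?_)
        simp only [Pi.sub_apply]
        ring
      rw [gnorm, heq.fderiv_eq, hD.fderiv]
      refine (norm_sub_le _ _).trans ?_
      rw [norm_neg, norm_smul, norm_smul, Real.norm_of_nonneg (by positivity),
        Real.norm_of_nonneg (by positivity)]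
      have h3 := gnorm_le hdl x
      rw [gnorm, NNReal.coe_one] at h3
      have h4 : 0 < 2 / ρ := by positivity
      have h5 : θ⁻¹ * ‖fderiv ℝ h x‖ = gnorm h x / θ := by rw [gnorm]; ring
      rw [h5]
      nlinarith

lemma exists_lipschitzWith_cutoff {n : ℕ} {h : En n → ℝ} {K : NNReal} (hh : LipschitzWith K h)
    (z : En n) (ρ θ : ℝ) :
    ∃ L, LipschitzWith L fun x => max (2 - 2 / ρ * dist x z - h x / θ) 0 := by
  have h1 : LipschitzWith (‖2 / ρ‖₊ * 1) fun x : En n => 2 / ρ * dist x z :=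
    (lipschitzWith_smul (2 / ρ)).comp (LipschitzWith.dist_left z)
  have h2 : LipschitzWith (‖θ⁻¹‖₊ * K) fun x : En n => θ⁻¹ * h x :=
    (lipschitzWith_smul θ⁻¹).comp hh
  simp only [div_eq_inv_mul (h _)]
  exact ⟨_, (((LipschitzWith.const (2 : ℝ)).sub h1).sub h2).max_const 0⟩

lemma min_rpow_le {Y M p : ℝ} (hY : 0 ≤ Y) (hM : 0 < M) (hp : 1 < p) :
    (min Y M) ^ p ≤ M ^ (p - 1) * Y := by
  have h0 : 0 ≤ min Y M := le_min hY hM.le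
  rcases h0.eq_or_lt with h | h
  · rw [← h, Real.zero_rpow (by linarith)]; positivity
  · have : (min Y M) ^ p = (min Y M) ^ (p - 1) * min Y M := by
      rw [Real.rpow_sub_one h.ne', div_mul_cancel₀ _ h.ne']
    rw [this]
    exact mul_le_mul (Real.rpow_le_rpow h0 (min_le_right _ _) (by linarith)) (min_le_left _ _) h0
      (by positivity)

lemma average_lipschitz {n : ℕ} (J : Finset ℕ) (fj : ℕ → En n → ℝ) (a : ℝ) (ha : 0 ≤ a)
    (hL : ∀ j ∈ J, ∃ L, LipschitzWith L (fj j)) :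
    (∃ L, LipschitzWith L fun x => a * ∑ j ∈ J, fj j x) ∧
      ∀ᵐ x, gnorm (fun x => a * ∑ j ∈ J, fj j x) x ≤ a * ∑ j ∈ J, gnorm (fj j) x := by
  constructor
  · have : ∃ L, LipschitzWith L fun x => ∑ j ∈ J, fj j x := by
      classical
      induction J using Finset.induction_on with
      | empty => exact ⟨0, by simp⟩
      | insert j J hj ih =>
        obtain ⟨L, hL1⟩ := ih fun i hi => hL i (Finset.mem_insert_of_mem hi)
        obtain ⟨M, hM⟩ := hL j (Finset.mem_insert_self _ _)
        refine ⟨M + L, ?_⟩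
        simp only [Finset.sum_insert hj]
        exact hM.add hL1
    obtain ⟨L, hL1⟩ := this
    exact ⟨_, (lipschitzWith_smul a).comp hL1⟩
  · have hd : ∀ᵐ x, ∀ j ∈ J, DifferentiableAt ℝ (fj j) x := by
      rw [Filter.eventually_all_finset]
      intro j hj
      obtain ⟨L, h⟩ := hL j hj
      exact h.ae_differentiableAt
    filter_upwards [hd] with x hx
    have hD := (HasFDerivAt.fun_sum fun j hj => (hx j hj).hasFDerivAt).const_mul a
    rw [gnorm, hD.fderiv, norm_smul, Real.norm_of_nonneg ha]
    gcongr
    exact norm_sum_le _ _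

/-- Energy estimate for the cutoff built from an average of truncations. -/
lemma cutoff_energy_le {n : ℕ} {p : ℝ} (hp : 1 < p) {z : En n} {ρ lam C : ℝ}
    (hρ : 0 < ρ) (hlam : 0 < lam) (hC : 0 < C) {k : ℕ} (hk : 0 < k) {f : En n → ℝ}
    (hf : ∃ K, LipschitzWith K f) (fj : ℕ → En n → ℝ) (W : ℕ → Set (En n))
    (hW : ∀ j, MeasurableSet (W j)) (hL : ∀ j ∈ Finset.Ico k (2 * k), ∃ L, LipschitzWith L (fj j))
    (hgr : ∀ j ∈ Finset.Ico k (2 * k), ∀ᵐ x, x ∈ ball z ρ → gnorm (fj j) x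
      ≤ (W j).indicator (fun _ => C * 2 ^ j * lam) x + min (gnorm f x) (C * 2 ^ j * lam)) :
    ρ ^ p * ∫ x in ball z ρ, gnorm (fun x => max (2 - 2 / ρ * dist x z -
        (1 / k * ∑ j ∈ Finset.Ico k (2 * k), fj j x) / (lam * ρ / 4)) 0) x ^ p
      ≤ 6 ^ p * volume.real (ball z ρ ∩
          {x | 1 / k * ∑ j ∈ Finset.Ico k (2 * k), fj j x < lam * ρ / 2})
        + 3 ^ p * (8 * C / k) ^ p *
          ∑ j ∈ Finset.Ico k (2 * k), ((2 : ℝ) ^ p) ^ j * volume.real (ball z ρ ∩ W j)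
        + 3 ^ p * (4 * C * 4 ^ k) ^ (p - 1) * (4 / lam) * ∫ x in ball z ρ, gnorm f x := by
  classical
  set J := Finset.Ico k (2 * k) with hJ
  set B := ball z ρ with hB
  set h : En n → ℝ := fun x => 1 / k * ∑ j ∈ J, fj j x with hh
  set θ : ℝ := lam * ρ / 4 with hθ
  have hθ0 : 0 < θ := by positivity
  have hkR : (0 : ℝ) < k := by exact_mod_cast hk
  have hp0 : 0 < p := by linarith
  obtain ⟨⟨L, hLh⟩, hgh⟩ := average_lipschitz J fj (1 / k) (by positivity) hL
  set v : En n → ℝ := fun x => max (2 - 2 / ρ * dist x z - h x / θ) 0 with hv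
  obtain ⟨K, hfK⟩ := hf
  have hBfin : volume B ≠ ⊤ := measure_ball_lt_top.ne
  have : IsFiniteMeasure (volume.restrict B) := isFiniteMeasure_restrict.2 hBfin
  set H : Set (En n) := {x | h x < lam * ρ / 2} with hH
  have hHm : MeasurableSet H := (isOpen_lt hLh.continuous continuous_const).measurableSet
  set M : ℝ := 4 * C * 4 ^ k with hM
  have hM0 : 0 < M := by positivity
  have hgJ : ∀ᵐ x, ∀ j ∈ J, x ∈ B → gnorm (fj j) x
      ≤ (W j).indicator (fun _ => C * 2 ^ j * lam) x + min (gnorm f x) (C * 2 ^ j * lam) := by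
    rw [Filter.eventually_all_finset]
    exact hgr
  have hpt : ∀ᵐ x ∂volume.restrict B, ρ ^ p * gnorm v x ^ p ≤
      6 ^ p * H.indicator (fun _ => (1 : ℝ)) x + 3 ^ p * (8 * C / k) ^ p *
        ∑ j ∈ J, ((2 : ℝ) ^ p) ^ j * (W j).indicator (fun _ => (1 : ℝ)) x
        + 3 ^ p * M ^ (p - 1) * (4 / lam) * gnorm f x := by
    rw [ae_restrict_iff' measurableSet_ball]
    filter_upwards [gnorm_cutoff_le hLh z hρ hθ0, hgh, hgJ] with x hx1 hx2 hx3 hxB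
    have hg0 := gnorm_nonneg f x
    have hi : ∀ j, 0 ≤ (W j).indicator (fun _ => (1 : ℝ)) x := fun j =>
      indicator_nonneg (fun _ _ => zero_le_one) x
    have hs0 : 0 ≤ ∑ j ∈ J, ((2 : ℝ) ^ p) ^ j * (W j).indicator (fun _ => (1 : ℝ)) x :=
      Finset.sum_nonneg fun j _ => mul_nonneg (by positivity) (hi j)
    have hH0 : 0 ≤ H.indicator (fun _ => (1 : ℝ)) x := indicator_nonneg (fun _ _ => zero_le_one) x
    rcases hx1 with hx1 | ⟨hxH, hx1⟩
    · rw [hx1, Real.zero_rpow hp0.ne', mul_zero]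
      have := Real.rpow_nonneg hM0.le (p - 1)
      positivity
    · have hxH' : x ∈ H := by
        show h x < lam * ρ / 2
        rw [hθ] at hxH; linarith
      set Y : ℝ := min (4 / lam * gnorm f x) M with hY
      have hY0 : 0 ≤ Y := le_min (by positivity) hM0.le
      set T : ℝ := ∑ j ∈ J.filter (fun j => x ∈ W j), (2 : ℝ) ^ j with hT
      have hT0 : 0 ≤ T := Finset.sum_nonneg fun j _ => by positivity
      have hTeq : T = ∑ j ∈ J, 2 ^ j * (W j).indicator (fun _ => (1 : ℝ)) x := by
        rw [hT, Finset.sum_filter]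
        refine Finset.sum_congr rfl fun j _ => ?_
        by_cases hj : x ∈ W j <;> simp [hj]
      have hTeq' : ∑ j ∈ J.filter (fun j => x ∈ W j), ((2 : ℝ) ^ p) ^ j
          = ∑ j ∈ J, ((2 : ℝ) ^ p) ^ j * (W j).indicator (fun _ => (1 : ℝ)) x := by
        rw [Finset.sum_filter]
        refine Finset.sum_congr rfl fun j _ => ?_
        by_cases hj : x ∈ W j <;> simp [hj]
      have hbound : ρ * gnorm v x ≤ 2 + 4 * C / k * T + Y := by
        have h1 : ρ * gnorm v x ≤ 2 + 4 / lam * gnorm h x := by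
          calc ρ * gnorm v x ≤ ρ * (2 / ρ + gnorm h x / θ) := by gcongr
            _ = _ := by rw [hθ]; field_simp
        have h2 : ∀ j ∈ J, 4 / lam * gnorm (fj j) x
            ≤ 4 * C * (2 ^ j * (W j).indicator (fun _ => (1 : ℝ)) x) + Y := by
          intro j hj
          have hj2 : (2 : ℝ) ^ j ≤ 4 ^ k := by
            rw [show (4 : ℝ) = 2 ^ 2 by norm_num, ← pow_mul]
            exact pow_le_pow_right₀ one_le_two (Finset.mem_Ico.1 hj).2.le
          calc 4 / lam * gnorm (fj j) x ≤ 4 / lam * ((W j).indicator (fun _ => C * 2 ^ j * lam) x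
                + min (gnorm f x) (C * 2 ^ j * lam)) := by
                have := hx3 j hj hxB
                gcongr
            _ = 4 * C * (2 ^ j * (W j).indicator (fun _ => (1 : ℝ)) x)
                + 4 / lam * min (gnorm f x) (C * 2 ^ j * lam) := by
                by_cases hj : x ∈ W j
                · simp only [indicator_of_mem hj]; field_simp
                · simp only [indicator_of_notMem hj]; ring
            _ ≤ _ := by
                gcongr
                rw [hY, mul_min_of_nonneg _ _ (by positivity)]
                refine min_le_min le_rfl ?_
                calc 4 / lam * (C * 2 ^ j * lam) = 4 * C * 2 ^ j := by field_simp
                  _ ≤ M := by rw [hM]; gcongr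
        have hcard : (J.card : ℝ) = k := by
          rw [hJ, Nat.card_Ico]; congr 1; omega
        have h3 : 4 / lam * gnorm h x ≤ 4 * C / k * T + Y := by
          calc 4 / lam * gnorm h x ≤ 4 / lam * (1 / k * ∑ j ∈ J, gnorm (fj j) x) := by gcongr
            _ = 1 / k * ∑ j ∈ J, 4 / lam * gnorm (fj j) x := by rw [← Finset.mul_sum]; ring
            _ ≤ 1 / k * ∑ j ∈ J, (4 * C * (2 ^ j * (W j).indicator (fun _ => (1 : ℝ)) x) + Y) := by
                gcongr with j hj
                exact h2 j hj
            _ = _ := by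
                rw [Finset.sum_add_distrib, ← Finset.mul_sum, ← hTeq, Finset.sum_const,
                  nsmul_eq_mul, hcard]
                field_simp
        linarith
      rw [← Real.mul_rpow hρ.le (gnorm_nonneg v x)]
      calc (ρ * gnorm v x) ^ p ≤ (2 + 4 * C / k * T + Y) ^ p :=
            Real.rpow_le_rpow (mul_nonneg hρ.le (gnorm_nonneg v x)) hbound hp0.le
        _ ≤ 3 ^ p * (2 ^ p + (4 * C / k * T) ^ p + Y ^ p) :=
            add_add_rpow_le two_pos.le (by positivity) hY0 hp0
        _ ≤ 3 ^ p * (2 ^ p + (4 * C / k) ^ p * (2 ^ p *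
              ∑ j ∈ J, ((2 : ℝ) ^ p) ^ j * (W j).indicator (fun _ => (1 : ℝ)) x)
              + M ^ (p - 1) * (4 / lam * gnorm f x)) := by
            rw [Real.mul_rpow (by positivity) hT0, ← hTeq']
            gcongr
            · exact sum_two_pow_rpow_le _ hp0
            · exact min_rpow_le (by positivity) hM0 hp
        _ = _ := by
            rw [indicator_of_mem hxH', show (6 : ℝ) = 3 * 2 by norm_num,
              Real.mul_rpow (by norm_num) two_pos.le,
              show 8 * C / k = 4 * C / k * 2 by ring, Real.mul_rpow (x := 4 * C / k) (by positivity)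
              two_pos.le]
            ring
  obtain ⟨L', hvL⟩ := exists_lipschitzWith_cutoff hLh z ρ θ
  have h_int_ind : ∀ S : Set (En n), MeasurableSet S →
      Integrable (S.indicator fun _ => (1 : ℝ)) (volume.restrict B) := fun S hS =>
    (integrable_const _).indicator hS
  have hval_ind : ∀ S : Set (En n), MeasurableSet S →
      ∫ x in B, S.indicator (fun _ => (1 : ℝ)) x = volume.real (B ∩ S) := fun S hS => by
    rw [setIntegral_indicator hS, setIntegral_const, smul_eq_mul, mul_one]
  have hi1 : Integrable (fun x => 6 ^ p * H.indicator (fun _ => (1 : ℝ)) x) (volume.restrict B) :=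
    (h_int_ind H hHm).const_mul _
  have hi2' : Integrable (fun x =>
      ∑ j ∈ J, ((2 : ℝ) ^ p) ^ j * (W j).indicator (fun _ => (1 : ℝ)) x)
      (volume.restrict B) := integrable_finsetSum _ fun j _ => (h_int_ind _ (hW j)).const_mul _
  have hi2 := hi2'.const_mul (3 ^ p * (8 * C / k) ^ p)
  have hi3 : Integrable (fun x => 3 ^ p * M ^ (p - 1) * (4 / lam) * gnorm f x)
      (volume.restrict B) := (integrableOn_gnorm hfK z ρ).const_mul _
  have hi0 : Integrable (fun x => ρ ^ p * gnorm v x ^ p) (volume.restrict B) := by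
    refine Integrable.const_mul ?_ _
    refine Measure.integrableOn_of_bounded (M := (L' : ℝ) ^ p) hBfin
      ((measurable_gnorm v).pow_const p).aestronglyMeasurable
      (Filter.Eventually.of_forall fun x => ?_)
    rw [Real.norm_of_nonneg (Real.rpow_nonneg (gnorm_nonneg v x) p)]
    exact Real.rpow_le_rpow (gnorm_nonneg v x) (gnorm_le hvL x) hp0.le
  have hfin := integral_mono_ae hi0 ((hi1.add hi2).add hi3) hpt
  rw [integral_const_mul] at hfin
  refine hfin.trans (le_of_eq ?_)
  refine (integral_add (hi1.add hi2) hi3).trans ?_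
  rw [integral_add' hi1 hi2, integral_const_mul, integral_const_mul, integral_const_mul,
    integral_finsetSum _ fun j _ => (h_int_ind _ (hW j)).const_mul _, hval_ind H hHm]
  simp only [integral_const_mul]
  congr 3
  refine Finset.sum_congr rfl fun j _ => ?_
  rw [hval_ind _ (hW j)]

/-- Uniform `p`-fatness of `F` at scales below one, tested with globally Lipschitz functions. -/
def UniformPFat {n : ℕ} (F : Set (En n)) (p c : ℝ) : Prop :=
  ∀ z ∈ F, ∀ ρ, 0 < ρ → ρ < 1 → ∀ v : En n → ℝ, (∃ K, LipschitzWith K v) →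
    (∀ x ∈ F ∩ closedBall z (ρ / 2), 1 ≤ v x) → (∀ x ∉ ball z ρ, v x = 0) →
    c * volume.real (ball z ρ) ≤ ρ ^ p * ∫ x in ball z ρ, gnorm v x ^ p

/-- Union of the balls centred on `F` over which the mean of `f` exceeds `lam` times the radius. -/
def fatSet {n : ℕ} (F : Set (En n)) (f : En n → ℝ) (lam : ℝ) : Set (En n) :=
  {x | ∃ z ∈ F, ‖z‖ < 1 / 2 - 4 / lam ∧ ∃ ρ, 0 < ρ ∧ x ∈ ball z ρ ∧
    lam * ρ * volume.real (ball z ρ) < ∫ w in ball z ρ, f w}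

lemma isOpen_maxSet {n : ℕ} (f : En n → ℝ) (t : ℝ) : IsOpen (maxSet f t) := by
  refine isOpen_iff_mem_nhds.2 ?_
  rintro x ⟨y, r, hr, hr1, hxy, h⟩
  exact Filter.mem_of_superset (isOpen_ball.mem_nhds hxy) fun w hw => ⟨y, r, hr, hr1, hw, h⟩

lemma isOpen_fatSet {n : ℕ} (F : Set (En n)) (f : En n → ℝ) (lam : ℝ) :
    IsOpen (fatSet F f lam) := by
  refine isOpen_iff_mem_nhds.2 ?_
  rintro x ⟨y, hy, hy1, r, hr, hxy, h⟩
  exact Filter.mem_of_superset (isOpen_ball.mem_nhds hxy) fun w hw => ⟨y, hy, hy1, r, hr, hw, h⟩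

lemma radius_lt_of_integral_lt {n : ℕ} {f : En n → ℝ} {K : NNReal} (hf : LipschitzWith K f)
    (hf1 : ∀ x, f x ≤ 1) {z : En n} {ρ lam : ℝ} (hρ : 0 < ρ) (hlam : 0 < lam)
    (h : lam * ρ * volume.real (ball z ρ) < ∫ w in ball z ρ, f w) : ρ < 1 / lam := by
  have hV := volume_ball_pos z hρ
  have : IsFiniteMeasure (volume.restrict (ball z ρ)) :=
    isFiniteMeasure_restrict.2 measure_ball_lt_top.ne
  have h1 : ∫ w in ball z ρ, f w ≤ volume.real (ball z ρ) := by
    calc ∫ w in ball z ρ, f w ≤ ∫ _w in ball z ρ, (1 : ℝ) :=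
          setIntegral_mono (continuous_integrableOn_ball hf.continuous z ρ) (integrable_const _) hf1
      _ = _ := by rw [setIntegral_const, smul_eq_mul, mul_one]
  rw [lt_div_iff₀ hlam]
  have h2 : lam * ρ * volume.real (ball z ρ) < 1 * volume.real (ball z ρ) := by linarith
  linarith [lt_of_mul_lt_mul_right h2 hV.le]

lemma volume_sublevel_le {n : ℕ} {f : En n → ℝ} {K : NNReal} (hf : LipschitzWith K f)
    {z : En n} {ρ lam κ : ℝ} (hρ : 0 < ρ) (hlam : 0 < lam)
    (h : lam * ρ * volume.real (ball z ρ) < ∫ w in ball z ρ, f w)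
    (hg : ∫ w in ball z ρ, gnorm f w ≤ κ * lam * volume.real (ball z ρ)) :
    volume.real (ball z ρ ∩ {x | f x < lam * ρ / 2})
      ≤ 2 ^ (n + 2) * κ * volume.real (ball z ρ) := by
  set B := ball z ρ with hB
  have hV := volume_ball_pos z hρ
  have : IsFiniteMeasure (volume.restrict B) := isFiniteMeasure_restrict.2 measure_ball_lt_top.ne
  set m := ⨍ y in B, f y with hm
  have hmlt : lam * ρ < m := by
    rw [hm, setAverage_eq, smul_eq_mul, ← div_eq_inv_mul, lt_div_iff₀ hV]
    exact h
  have hmk := mul_meas_ge_le_integral_of_nonneg (μ := volume.restrict B)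
    (f := fun x => |f x - m|) (Filter.Eventually.of_forall fun x => abs_nonneg _)
    (continuous_integrableOn_ball ((hf.continuous.sub continuous_const).abs) z ρ) (lam * ρ / 2)
  have hP := poincare_ball hf z hρ
  have hle : volume.real (B ∩ {x | f x < lam * ρ / 2})
      ≤ (volume.restrict B).real {x | lam * ρ / 2 ≤ |f x - m|} := by
    rw [measureReal_restrict_apply' measurableSet_ball]
    refine measureReal_mono ?_ ((measure_mono inter_subset_right).trans_lt
      measure_ball_lt_top).ne
    rintro x ⟨hx, hx1⟩
    refine ⟨?_, hx⟩
    simp only [mem_ofPred_eq] at hx1 ⊢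
    rw [abs_sub_comm]
    exact le_trans (by linarith) (le_abs_self _)
  have h1 : lam * ρ / 2 * volume.real (B ∩ {x | f x < lam * ρ / 2})
      ≤ lam * ρ / 2 * (2 ^ (n + 2) * κ * volume.real B) := by
    calc _ ≤ lam * ρ / 2 * (volume.restrict B).real {x | lam * ρ / 2 ≤ |f x - m|} := by gcongr
      _ ≤ _ := hmk
      _ ≤ _ := hP
      _ ≤ 2 ^ (n + 1) * ρ * (κ * lam * volume.real B) := by gcongr
      _ = _ := by ring
  exact le_of_mul_le_mul_left h1 (by positivity)

lemma abs_sub_le_of_notMem_maxSet_union_fatSet {n : ℕ} {F : Set (En n)} {f : En n → ℝ}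
    {K : NNReal} (hf : LipschitzWith K f) (hf0 : ∀ x, 0 ≤ f x)
    (hfF : ∀ x ∈ F ∩ closedBall 0 (1 / 2), f x = 0) {z : En n} {ρ m : ℝ}
    (hρ : 32 * ρ ≤ 1) (hm : 0 < m) (hz : ‖z‖ + ρ ≤ 1 / 2 - 4 / m) :
    ∀ x ∈ (ball z ρ \ (maxSet f m ∪ fatSet F f m)) ∪ (F ∩ ball z ρ),
      ∀ y ∈ (ball z ρ \ (maxSet f m ∪ fatSet F f m)) ∪ (F ∩ ball z ρ),
        |f x - f y| ≤ (6 * 4 ^ (n + 1) + 2) * m * dist x y := by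
  have hF0 : ∀ x ∈ F ∩ ball z ρ, ‖x‖ < 1 / 2 - 4 / m ∧ f x = 0 := by
    rintro x ⟨hxF, hx⟩
    have h1 : ‖x‖ ≤ ‖z‖ + dist x z := by
      rw [dist_eq_norm]
      calc ‖x‖ = ‖z + (x - z)‖ := by congr 1; abel
        _ ≤ _ := norm_add_le _ _
    have h2 : dist x z < ρ := hx
    have h3 : 0 < 4 / m := by positivity
    refine ⟨by linarith, hfF x ⟨hxF, ?_⟩⟩
    rw [mem_closedBall_zero_iff]; linarith
  have hdist : ∀ x ∈ ball z ρ, ∀ y ∈ ball z ρ, 4 * dist x y ≤ 1 := by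
    intro x hx y hy
    have h1 := dist_triangle_right x y z
    have h2 : dist x z < ρ := hx
    have h3 : dist y z < ρ := hy
    linarith
  have hmix : ∀ x ∈ ball z ρ \ (maxSet f m ∪ fatSet F f m), ∀ y ∈ F ∩ ball z ρ,
      |f x - f y| ≤ (6 * 4 ^ (n + 1) + 2) * m * dist x y := by
    rintro x ⟨hx, hxW⟩ y hy
    obtain ⟨hy1, hy0⟩ := hF0 y hy
    rcases (dist_nonneg (x := x) (y := y)).eq_or_lt with h | h
    · simp [dist_eq_zero.1 h.symm]
    rw [hy0, sub_zero, abs_of_nonneg (hf0 x)]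
    refine le_of_notMem_maxSet hf h (hdist x hx y hy.2) (fun hh => hxW (Or.inl hh)) ?_
    by_contra! hlt
    refine hxW (Or.inr ⟨y, hy.1, hy1, 2 * dist x y, by positivity, ?_, hlt⟩)
    rw [mem_ball]; linarith
  rintro x (hx | hx) y (hy | hy)
  · have h1 := hdist x hx.1 y hy.1
    have h2 := dist_nonneg (x := x) (y := y)
    refine (abs_sub_le_of_notMem_maxSet hf (by linarith) (fun hh => hx.2 (Or.inl hh))
      (fun hh => hy.2 (Or.inl hh))).trans ?_
    gcongr
    linarith
  · exact hmix x hx y hy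
  · rw [abs_sub_comm, dist_comm]
    exact hmix y hy x hx
  · rw [(hF0 x hx).2, (hF0 y hy).2, sub_self, abs_zero]
    positivity

/-- Local good-`lam` estimate on a ball centred on `F`. -/
lemma volume_ball_le_sum {n : ℕ} (hn : 0 < n) {p c : ℝ} (hp : 1 < p) (hc : 0 < c)
    {F : Set (En n)} (hF : UniformPFat F p c) {f : En n → ℝ} {K : NNReal}
    (hf : LipschitzWith K f) (hf0 : ∀ x, 0 ≤ f x) (hf1 : ∀ x, f x ≤ 1)
    (hfF : ∀ x ∈ F ∩ closedBall 0 (1 / 2), f x = 0) {k : ℕ} (hk : 0 < k) {lam κ c₀ : ℝ}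
    (hlam : 32 ≤ lam) (hc₀ : 0 < c₀) (hκ1 : 6 ^ p * (2 ^ (n + 2) * κ + c₀) ≤ c / 4)
    (hκ2 : 3 ^ p * (4 * (6 * 4 ^ (n + 1) + 2) * 4 ^ k) ^ (p - 1) * 4 * κ ≤ c / 4)
    {z : En n} (hz : z ∈ F) (hz1 : ‖z‖ < 1 / 2 - 4 / lam) {ρ : ℝ} (hρ : 0 < ρ)
    (h : lam * ρ * volume.real (ball z ρ) < ∫ w in ball z ρ, f w)
    (hg : ∫ w in ball z ρ, gnorm f w ≤ κ * lam * volume.real (ball z ρ)) :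
    volume.real (ball z ρ) ≤
      (c₀⁻¹ + 2 / c * (3 ^ p * (8 * (6 * 4 ^ (n + 1) + 2)) ^ p)) * (k : ℝ) ^ (-p) *
        ∑ j ∈ Finset.Ico k (2 * k), ((2 : ℝ) ^ p) ^ j *
          volume.real (ball z ρ ∩ (maxSet f (lam * 2 ^ j) ∪ fatSet F f (lam * 2 ^ j))) := by
  set C : ℝ := 6 * 4 ^ (n + 1) + 2 with hC
  have hC0 : 0 < C := by positivity
  have hlam0 : 0 < lam := by linarith
  have hp0 : 0 < p := by linarith
  have hkR : (0 : ℝ) < k := by exact_mod_cast hk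
  set W : ℕ → Set (En n) := fun j => maxSet f (lam * 2 ^ j) ∪ fatSet F f (lam * 2 ^ j) with hW
  have hWm : ∀ j, MeasurableSet (W j) := fun j =>
    ((isOpen_maxSet f _).union (isOpen_fatSet F f _)).measurableSet
  set J := Finset.Ico k (2 * k) with hJ
  set B := ball z ρ with hB
  have hV : 0 < volume.real B := volume_ball_pos z hρ
  have hBfin : volume B ≠ ⊤ := measure_ball_lt_top.ne
  have hρ1 : ρ < 1 / lam := radius_lt_of_integral_lt hf hf1 hρ hlam0 h
  have hρ32 : 32 * ρ ≤ 1 := by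
    rw [lt_div_iff₀ hlam0] at hρ1
    nlinarith
  set Sw : ℝ := ∑ j ∈ J, ((2 : ℝ) ^ p) ^ j * volume.real (B ∩ W j) with hS
  have hS0 : 0 ≤ Sw := Finset.sum_nonneg fun j _ => by positivity
  have hc1 : 0 < c₀⁻¹ := inv_pos.2 hc₀
  set D : ℝ := 2 / c * (3 ^ p * (8 * C) ^ p) with hD
  have hD0 : 0 < D := by positivity
  have hkp : 0 < (k : ℝ) ^ (-p) := Real.rpow_pos_of_pos hkR _
  have htr : ∀ j ∈ J, ∃ g : En n → ℝ, LipschitzWith (C * 2 ^ j * lam).toNNReal g ∧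
      (∀ x, 0 ≤ g x) ∧ (∀ x ∈ (B \ W j) ∪ (F ∩ B), g x = f x) ∧
      ∀ᵐ x, gnorm g x ≤ (B \ W j)ᶜ.indicator (fun _ => C * 2 ^ j * lam) x
        + min (gnorm f x) (C * 2 ^ j * lam) := by
    intro j hj
    refine exists_lipschitz_truncation hn hf hf0 (measurableSet_ball.diff (hWm j))
      (by positivity) ?_
    intro x hx y hy
    rw [show C * 2 ^ j * lam = C * (lam * 2 ^ j) by ring]
    refine abs_sub_le_of_notMem_maxSet_union_fatSet hf hf0 hfF hρ32 (by positivity) ?_ x hx y hy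
    have hj1 : (2 : ℝ) ≤ 2 ^ j := by
      have : 1 ≤ j := by rw [hJ, Finset.mem_Ico] at hj; omega
      simpa using pow_le_pow_right₀ one_le_two this
    have h4 : 4 / (lam * 2 ^ j) ≤ 2 * (1 / lam) := by
      rw [mul_one_div, div_le_div_iff₀ (by positivity) hlam0]
      nlinarith
    have h5 : 4 / lam = 4 * (1 / lam) := by ring
    linarith
  choose! g hgL hg0 hgf hgr using htr
  by_cases hcase : c₀ * volume.real B < ∑ j ∈ J, volume.real (B ∩ W j)
  · have h1 : (k : ℝ) ^ p * ∑ j ∈ J, volume.real (B ∩ W j) ≤ Sw := by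
      rw [hS, Finset.mul_sum]
      refine Finset.sum_le_sum fun j hj => ?_
      gcongr
      rw [← Real.rpow_natCast, ← Real.rpow_mul two_pos.le, mul_comm, Real.rpow_mul two_pos.le,
        Real.rpow_natCast]
      refine Real.rpow_le_rpow hkR.le ?_ hp0.le
      calc (k : ℝ) ≤ j := by exact_mod_cast (Finset.mem_Ico.1 hj).1
        _ ≤ 2 ^ j := by exact_mod_cast (Nat.lt_two_pow_self).le
    have h2 : volume.real B ≤ c₀⁻¹ * (k : ℝ) ^ (-p) * Sw := by
      calc volume.real B = c₀⁻¹ * (k : ℝ) ^ (-p) * ((k : ℝ) ^ p * (c₀ * volume.real B)) := by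
            rw [Real.rpow_neg hkR.le]
            have := (Real.rpow_pos_of_pos hkR p).ne'
            field_simp
        _ ≤ c₀⁻¹ * (k : ℝ) ^ (-p) * ((k : ℝ) ^ p * ∑ j ∈ J, volume.real (B ∩ W j)) := by gcongr
        _ ≤ _ := by gcongr
    refine h2.trans ?_
    gcongr
    linarith
  · rw [not_lt] at hcase
    have hen := cutoff_energy_le (z := z) hp hρ hlam0 hC0 hk ⟨K, hf⟩ g W hWm
      (fun j hj => ⟨_, hgL j hj⟩) fun j hj => by
        filter_upwards [hgr j hj] with x hx hxB
        refine hx.trans (le_of_eq ?_)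
        congr 1
        by_cases hxW : x ∈ W j
        · rw [indicator_of_mem hxW, indicator_of_mem (by simp [hxW])]
        · rw [indicator_of_notMem hxW, indicator_of_notMem (by simp [hxW, hxB, B])]
    set hh : En n → ℝ := fun x => 1 / k * ∑ j ∈ J, g j x with hhdef
    obtain ⟨⟨L, hLh⟩, -⟩ := average_lipschitz J g (1 / k) (by positivity)
      fun j hj => ⟨_, hgL j hj⟩
    have hhF : ∀ x ∈ F ∩ B, hh x = 0 := by
      rintro x ⟨hxF, hxB⟩
      have hfx : f x = 0 := by
        refine hfF x ⟨hxF, ?_⟩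
        have h1 : ‖x‖ ≤ ‖z‖ + dist x z := by
          rw [dist_eq_norm]
          calc ‖x‖ = ‖z + (x - z)‖ := by congr 1; abel
            _ ≤ _ := norm_add_le _ _
        have h2 : dist x z < ρ := hxB
        have h3 : 4 / lam = 4 * (1 / lam) := by ring
        have h4 : 0 < 1 / lam := by positivity
        rw [mem_closedBall_zero_iff]; linarith
      rw [hhdef]
      simp only
      rw [Finset.sum_eq_zero fun j hj => (hgf j hj x (Or.inr ⟨hxF, hxB⟩)).trans hfx, mul_zero]
    have hh0 : ∀ x, 0 ≤ hh x := fun x =>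
      mul_nonneg (by positivity) (Finset.sum_nonneg fun j hj => hg0 j hj x)
    have hfat := hF z hz ρ hρ (by linarith) _ (exists_lipschitzWith_cutoff hLh z ρ (lam * ρ / 4))
      (by
        rintro x ⟨hxF, hx⟩
        have hxB : x ∈ B := closedBall_subset_ball (by linarith) hx
        refine le_trans ?_ (le_max_left _ _)
        have : (1 / k * ∑ j ∈ J, g j x) = 0 := hhF x ⟨hxF, hxB⟩
        rw [this, zero_div, sub_zero]
        have h1 : 2 / ρ * dist x z ≤ 2 / ρ * (ρ / 2) := by gcongr; exact hx
        have h2 : 2 / ρ * (ρ / 2) = 1 := by field_simp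
        linarith)
      (by
        intro x hx
        refine max_eq_right ?_
        have h1 : 2 / ρ * ρ ≤ 2 / ρ * dist x z := by
          gcongr
          simpa using hx
        have h2 : 2 / ρ * ρ = 2 := by field_simp
        have h3 : 0 ≤ hh x / (lam * ρ / 4) := div_nonneg (hh0 x) (by positivity)
        linarith)
    have hkey := hfat.trans hen
    have hHle : volume.real (B ∩ {x | hh x < lam * ρ / 2})
        ≤ (2 ^ (n + 2) * κ + c₀) * volume.real B := by
      have hsub : B ∩ {x | hh x < lam * ρ / 2} ⊆
          (B ∩ {x | f x < lam * ρ / 2}) ∪ ⋃ j ∈ J, B ∩ W j := by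
        rintro x ⟨hxB, hx⟩
        by_cases hxW : ∃ j ∈ J, x ∈ W j
        · obtain ⟨j, hj, hxj⟩ := hxW
          exact Or.inr (mem_biUnion hj ⟨hxB, hxj⟩)
        · push Not at hxW
          refine Or.inl ⟨hxB, ?_⟩
          have heq : hh x = f x := by
            have hcard : (J.card : ℝ) = k := by rw [hJ, Nat.card_Ico]; congr 1; omega
            rw [hhdef]
            simp only
            rw [Finset.sum_congr rfl fun j hj => hgf j hj x (Or.inl ⟨hxB, hxW j hj⟩),
              Finset.sum_const, nsmul_eq_mul, hcard]
            field_simp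
          rw [mem_ofPred_eq, ← heq]
          exact hx
      have hfin : volume ((B ∩ {x | f x < lam * ρ / 2}) ∪ ⋃ j ∈ J, B ∩ W j) ≠ ⊤ :=
        ((measure_mono (union_subset inter_subset_left
          (iUnion₂_subset fun j _ => inter_subset_left))).trans_lt measure_ball_lt_top).ne
      have h1 := measureReal_mono hsub hfin
      have h2 := measureReal_union_le (μ := volume) (B ∩ {x | f x < lam * ρ / 2})
        (⋃ j ∈ J, B ∩ W j)
      have h3 := measureReal_biUnion_finset_le (μ := volume) J fun j => B ∩ W j
      have h4 := volume_sublevel_le hf hρ hlam0 h hg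
      linarith
    have hM0 : 0 ≤ (4 * C * 4 ^ k) ^ (p - 1) := Real.rpow_nonneg (by positivity) _
    have e1 : 6 ^ p * volume.real (B ∩ {x | hh x < lam * ρ / 2}) ≤ c / 4 * volume.real B := by
      calc _ ≤ 6 ^ p * ((2 ^ (n + 2) * κ + c₀) * volume.real B) := by gcongr
        _ = 6 ^ p * (2 ^ (n + 2) * κ + c₀) * volume.real B := by ring
        _ ≤ _ := by gcongr
    have e2 : 3 ^ p * (4 * C * 4 ^ k) ^ (p - 1) * (4 / lam) * ∫ x in B, gnorm f x
        ≤ c / 4 * volume.real B := by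
      calc _ ≤ 3 ^ p * (4 * C * 4 ^ k) ^ (p - 1) * (4 / lam) * (κ * lam * volume.real B) := by
            gcongr
        _ = 3 ^ p * (4 * C * 4 ^ k) ^ (p - 1) * 4 * κ * volume.real B := by field_simp
        _ ≤ _ := by gcongr
    have e3 : 3 ^ p * (8 * C / k) ^ p * Sw = c / 2 * (D * (k : ℝ) ^ (-p) * Sw) := by
      rw [hD, Real.div_rpow (by positivity) hkR.le, Real.rpow_neg hkR.le]
      field_simp
    have e4 : c * volume.real B ≤ c / 4 * volume.real B
        + c / 2 * (D * (k : ℝ) ^ (-p) * Sw) + c / 4 * volume.real B := by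
      rw [← e3]
      exact hkey.trans (add_le_add (add_le_add e1 le_rfl) e2)
    have e5 : c / 2 * volume.real B ≤ c / 2 * (D * (k : ℝ) ^ (-p) * Sw) := by linarith
    refine (le_of_mul_le_mul_left e5 (by positivity)).trans ?_
    gcongr
    linarith

lemma maxSet_anti {n : ℕ} (f : En n → ℝ) {t t' : ℝ} (h : t' ≤ t) : maxSet f t ⊆ maxSet f t' := by
  rintro x ⟨y, r, hr, hr1, hxy, hlt⟩
  exact ⟨y, r, hr, hr1, hxy, lt_of_le_of_lt (by gcongr) hlt⟩

lemma volume_fatSet_le {n : ℕ} (hn : 0 < n) {p c : ℝ} (hp : 1 < p) (hc : 0 < c)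
    {F : Set (En n)} (hF : UniformPFat F p c) {f : En n → ℝ} {K : NNReal}
    (hf : LipschitzWith K f) (hf0 : ∀ x, 0 ≤ f x) (hf1 : ∀ x, f x ≤ 1)
    (hfF : ∀ x ∈ F ∩ closedBall 0 (1 / 2), f x = 0) {k : ℕ} (hk : 0 < k) {lam κ c₀ D : ℝ}
    (hlam : 32 ≤ lam) (hc₀ : 0 < c₀) (hκ1 : 6 ^ p * (2 ^ (n + 2) * κ + c₀) ≤ c / 4)
    (hκ2 : 3 ^ p * (4 * (6 * 4 ^ (n + 1) + 2) * 4 ^ k) ^ (p - 1) * 4 * κ ≤ c / 4)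
    (hD : D = c₀⁻¹ + 2 / c * (3 ^ p * (8 * (6 * 4 ^ (n + 1) + 2)) ^ p)) :
    volume (fatSet F f lam) ≤ volume (maxSet f (κ * lam)) +
      ENNReal.ofReal (5 ^ n * (D * (k : ℝ) ^ (-p))) * ∑ j ∈ Finset.Ico k (2 * k),
        ENNReal.ofReal (((2 : ℝ) ^ p) ^ j) *
          (volume (maxSet f (lam * 2 ^ j)) + volume (fatSet F f (lam * 2 ^ j))) := by
  have hlam0 : 0 < lam := by linarith
  set W : ℕ → Set (En n) := fun j => maxSet f (lam * 2 ^ j) ∪ fatSet F f (lam * 2 ^ j) with hW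
  set J := Finset.Ico k (2 * k) with hJ
  have hD0 : 0 ≤ D := by rw [hD]; positivity
  have hQ : 0 ≤ D * (k : ℝ) ^ (-p) := mul_nonneg hD0 (Real.rpow_nonneg (by positivity) _)
  set ν : Measure (En n) := ENNReal.ofReal (D * (k : ℝ) ^ (-p)) •
    ∑ j ∈ J, ENNReal.ofReal (((2 : ℝ) ^ p) ^ j) • volume.restrict (W j) with hν
  have hcov := volume_le_of_ball_cover ν (fatSet F f lam \ maxSet f (κ * lam)) 1 (by
    rintro x ⟨⟨z, hz, hz1, ρ, hρ, hxρ, hlt⟩, hx⟩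
    have hρ1 : ρ < 1 / lam := radius_lt_of_integral_lt hf hf1 hρ hlam0 hlt
    have hρ2 : ρ ≤ 1 := by
      rw [lt_div_iff₀ hlam0] at hρ1
      nlinarith
    refine ⟨z, ρ, hρ, hρ2, hxρ, ?_⟩
    have h1 := volume_ball_le_sum hn hp hc hF hf hf0 hf1 hfF hk hlam hc₀ hκ1 hκ2 hz hz1 hρ hlt
      (integral_le_of_notMem_maxSet hx hρ hρ2 hxρ)
    rw [← hD] at h1
    rw [hν, Measure.smul_apply, Measure.finsetSum_apply, smul_eq_mul,
      ← ofReal_measureReal (measure_ball_lt_top (μ := volume)).ne]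
    refine (ENNReal.ofReal_le_ofReal h1).trans (le_of_eq ?_)
    rw [ENNReal.ofReal_mul hQ, ENNReal.ofReal_sum_of_nonneg fun j _ => by positivity]
    congr 1
    refine Finset.sum_congr rfl fun j _ => ?_
    rw [ENNReal.ofReal_mul (by positivity), Measure.smul_apply, smul_eq_mul,
      Measure.restrict_apply measurableSet_ball, ofReal_measureReal
      ((measure_mono inter_subset_left).trans_lt measure_ball_lt_top).ne])
  calc volume (fatSet F f lam)
      ≤ volume (maxSet f (κ * lam) ∪ (fatSet F f lam \ maxSet f (κ * lam))) := by
        rw [union_sdiff_self]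
        exact measure_mono subset_union_right
    _ ≤ volume (maxSet f (κ * lam)) + volume (fatSet F f lam \ maxSet f (κ * lam)) :=
        measure_union_le _ _
    _ ≤ volume (maxSet f (κ * lam)) + ENNReal.ofReal (5 ^ n) * ν univ := by gcongr
    _ ≤ _ := by
        rw [ENNReal.ofReal_mul (by positivity), mul_assoc]
        gcongr
        rw [hν, Measure.smul_apply, Measure.finsetSum_apply, smul_eq_mul]
        gcongr with j hj
        rw [Measure.smul_apply, smul_eq_mul, Measure.restrict_apply_univ]
        gcongr
        exact measure_union_le _ _

lemma tsum_le_three_mul_tsum {a b : ℕ → ENNReal} {Q p s : ℝ} {k : ℕ} (hs : s ≤ p)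
    (h2 : ((2 : ℝ) ^ (p - s)) ^ (2 * k) ≤ 2) (hQ : 0 ≤ Q) (hQk : Q * k * 2 ≤ 1 / 2)
    (hrec : ∀ i, a i ≤ b i + ENNReal.ofReal Q * ∑ j ∈ Finset.Ico k (2 * k),
      ENNReal.ofReal (((2 : ℝ) ^ p) ^ j) * (b (i + j) + a (i + j)))
    (hfin : ∑' i, ENNReal.ofReal (((2 : ℝ) ^ s) ^ i) * a i ≠ ⊤) :
    ∑' i, ENNReal.ofReal (((2 : ℝ) ^ s) ^ i) * a i
      ≤ 3 * ∑' i, ENNReal.ofReal (((2 : ℝ) ^ s) ^ i) * b i := by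
  set A := ∑' i, ENNReal.ofReal (((2 : ℝ) ^ s) ^ i) * a i with hA
  set B := ∑' i, ENNReal.ofReal (((2 : ℝ) ^ s) ^ i) * b i with hB
  set J := Finset.Ico k (2 * k) with hJ
  have hshift : ∀ j ∈ J, ∑' i, ENNReal.ofReal (((2 : ℝ) ^ s) ^ i) *
      (ENNReal.ofReal (((2 : ℝ) ^ p) ^ j) * (b (i + j) + a (i + j))) ≤ 2 * (B + A) := by
    intro j hj
    have hfac : ∀ i : ℕ, ENNReal.ofReal (((2 : ℝ) ^ s) ^ i) * ENNReal.ofReal (((2 : ℝ) ^ p) ^ j)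
        ≤ 2 * ENNReal.ofReal (((2 : ℝ) ^ s) ^ (i + j)) := by
      intro i
      rw [← ENNReal.ofReal_mul (by positivity), ← ENNReal.ofReal_ofNat,
        ← ENNReal.ofReal_mul two_pos.le]
      refine ENNReal.ofReal_le_ofReal ?_
      have h3 : ((2 : ℝ) ^ (p - s)) ^ j ≤ 2 := by
        refine le_trans (pow_le_pow_right₀ (Real.one_le_rpow one_le_two (by linarith)) ?_) h2
        exact (Finset.mem_Ico.1 hj).2.le
      have h4 : (2 : ℝ) ^ p = 2 ^ (p - s) * 2 ^ s := by
        rw [← Real.rpow_add two_pos, sub_add_cancel]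
      calc ((2 : ℝ) ^ s) ^ i * ((2 : ℝ) ^ p) ^ j
          = ((2 : ℝ) ^ (p - s)) ^ j * ((2 : ℝ) ^ s) ^ (i + j) := by
            rw [h4, mul_pow, pow_add]; ring
        _ ≤ _ := by gcongr
    calc _ ≤ ∑' i, 2 * (ENNReal.ofReal (((2 : ℝ) ^ s) ^ (i + j)) * (b (i + j) + a (i + j))) := by
          refine ENNReal.tsum_le_tsum fun i => ?_
          rw [← mul_assoc, ← mul_assoc]
          exact mul_le_mul' (hfac i) le_rfl
      _ = 2 * ∑' i, ENNReal.ofReal (((2 : ℝ) ^ s) ^ (i + j)) * (b (i + j) + a (i + j)) :=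
          ENNReal.tsum_mul_left
      _ ≤ 2 * ∑' i, ENNReal.ofReal (((2 : ℝ) ^ s) ^ i) * (b i + a i) := by
          refine mul_le_mul' le_rfl ?_
          exact ENNReal.tsum_comp_le_tsum_of_injective (add_left_injective j)
            fun i => ENNReal.ofReal (((2 : ℝ) ^ s) ^ i) * (b i + a i)
      _ = _ := by simp only [mul_add, ENNReal.tsum_add, ← hA, ← hB]
  have hmain : A ≤ B + ENNReal.ofReal (1 / 2) * (B + A) := by
    calc A ≤ ∑' i, (ENNReal.ofReal (((2 : ℝ) ^ s) ^ i) * b i + ENNReal.ofReal Q *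
          ∑ j ∈ J, ENNReal.ofReal (((2 : ℝ) ^ s) ^ i) *
            (ENNReal.ofReal (((2 : ℝ) ^ p) ^ j) * (b (i + j) + a (i + j)))) := by
          refine ENNReal.tsum_le_tsum fun i => ?_
          refine (mul_le_mul_right (hrec i) _).trans (le_of_eq ?_)
          rw [mul_add, ← Finset.mul_sum]
          ring
      _ = B + ENNReal.ofReal Q * ∑ j ∈ J, ∑' i, ENNReal.ofReal (((2 : ℝ) ^ s) ^ i) *
            (ENNReal.ofReal (((2 : ℝ) ^ p) ^ j) * (b (i + j) + a (i + j))) := by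
          rw [ENNReal.tsum_add, ENNReal.tsum_mul_left, Summable.tsum_finsetSum
            fun j _ => ENNReal.summable]
      _ ≤ B + ENNReal.ofReal Q * ∑ _j ∈ J, 2 * (B + A) := by
          gcongr with j hj
          exact hshift j hj
      _ = B + ENNReal.ofReal (Q * k * 2) * (B + A) := by
          rw [Finset.sum_const, hJ, Nat.card_Ico, show 2 * k - k = k by omega, nsmul_eq_mul,
            ENNReal.ofReal_mul (by positivity), ENNReal.ofReal_mul hQ, ENNReal.ofReal_natCast,
            ENNReal.ofReal_ofNat]
          ring
      _ ≤ _ := by gcongr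
  by_cases hBt : B = ⊤
  · rw [hBt, ENNReal.mul_top (by norm_num)]; exact le_top
  clear_value A B
  clear hA hB
  lift A to NNReal using hfin
  lift B to NNReal using hBt
  have : (ENNReal.ofReal (1 / 2)) = ((1 / 2 : NNReal) : ENNReal) := by
    rw [ENNReal.ofReal]; congr 1; ext; norm_num
  rw [this] at hmain
  norm_cast at hmain ⊢
  have h3 : (A : ℝ) ≤ B + 1 / 2 * (B + A) := by exact_mod_cast hmain
  have h4 : (A : ℝ) ≤ 3 * B := by linarith
  exact_mod_cast h4

lemma fatSet_eq_empty {n : ℕ} {F : Set (En n)} {f : En n → ℝ} {K : NNReal}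
    (hf : LipschitzWith K f) (hfF : ∀ x ∈ F ∩ closedBall 0 (1 / 2), f x = 0) {lam : ℝ}
    (hlam : 0 < lam) (hK : K ≤ lam) : fatSet F f lam = ∅ := by
  refine eq_empty_of_forall_notMem ?_
  rintro x ⟨z, hz, hz1, ρ, hρ, -, hlt⟩
  have hV := volume_ball_pos z hρ
  have : IsFiniteMeasure (volume.restrict (ball z ρ)) :=
    isFiniteMeasure_restrict.2 measure_ball_lt_top.ne
  have h4 : 0 < 4 / lam := by positivity
  have hfz : f z = 0 := hfF z ⟨hz, by rw [mem_closedBall_zero_iff]; linarith⟩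
  have h1 : ∫ w in ball z ρ, f w ≤ ∫ _w in ball z ρ, lam * ρ := by
    refine setIntegral_mono_on (continuous_integrableOn_ball hf.continuous z ρ)
      (integrable_const _) measurableSet_ball fun w hw => ?_
    have h2 := hf.dist_le_mul w z
    rw [hfz, Real.dist_0_eq_abs] at h2
    have h3 : dist w z ≤ ρ := (mem_ball.1 hw).le
    calc f w ≤ K * dist w z := (le_abs_self _).trans h2
      _ ≤ lam * ρ := by gcongr
  rw [setIntegral_const, smul_eq_mul] at h1
  linarith

lemma fatSet_subset_ball {n : ℕ} {F : Set (En n)} {f : En n → ℝ} {K : NNReal}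
    (hf : LipschitzWith K f) (hf1 : ∀ x, f x ≤ 1) {lam : ℝ} (hlam : 0 < lam) :
    fatSet F f lam ⊆ ball 0 1 := by
  rintro x ⟨z, hz, hz1, ρ, hρ, hx, hlt⟩
  have h1 := radius_lt_of_integral_lt hf hf1 hρ hlam hlt
  have h2 : ‖x‖ ≤ ‖z‖ + dist x z := by
    rw [dist_eq_norm]
    calc ‖x‖ = ‖z + (x - z)‖ := by congr 1; abel
      _ ≤ _ := norm_add_le _ _
  have h3 : dist x z < ρ := hx
  have h4 : 4 / lam = 4 * (1 / lam) := by ring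
  have h5 : 0 < 1 / lam := by positivity
  rw [mem_ball_zero_iff]; linarith

/-- Some power below `p` controls the size of `fatSet`. -/
lemma exists_volume_fatSet_le_lintegral (n : ℕ) (hn : 0 < n) {p c : ℝ} (hp : 1 < p) (hc : 0 < c) :
    ∃ ε C : ℝ, 0 < ε ∧ ε < p - 1 ∧ 0 < C ∧ ∀ F : Set (En n), UniformPFat F p c →
      ∀ f : En n → ℝ, (∃ K, LipschitzWith K f) → (∀ x, 0 ≤ f x) → (∀ x, f x ≤ 1) →
        (∀ x ∈ F ∩ closedBall 0 (1 / 2), f x = 0) →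
          volume (fatSet F f 32) ≤
            ENNReal.ofReal C * ∫⁻ x, ENNReal.ofReal (gnorm f x ^ (p - ε)) := by
  set c₀ : ℝ := c / (8 * 6 ^ p) with hc₀def
  have h6 : (0 : ℝ) < 6 ^ p := by positivity
  have hc₀ : 0 < c₀ := by positivity
  set D : ℝ := c₀⁻¹ + 2 / c * (3 ^ p * (8 * (6 * 4 ^ (n + 1) + 2)) ^ p) with hD
  have hD0 : 0 < D := by positivity
  obtain ⟨k, hk, hkD⟩ : ∃ k : ℕ, 0 < k ∧ 5 ^ n * (D * (k : ℝ) ^ (-p)) * k * 2 ≤ 1 / 2 := by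
    have hlim : Filter.Tendsto (fun k : ℕ => 5 ^ n * D * 2 * (k : ℝ) ^ (-(p - 1))) Filter.atTop
        (nhds (5 ^ n * D * 2 * 0)) :=
      ((tendsto_rpow_neg_atTop (by linarith)).comp tendsto_natCast_atTop_atTop).const_mul _
    rw [mul_zero] at hlim
    obtain ⟨k, hk1, hk2⟩ := ((hlim.eventually (ge_mem_nhds (show (0 : ℝ) < 1 / 2 by norm_num))).and
      (Filter.eventually_gt_atTop 0)).exists
    refine ⟨k, hk2, le_trans (le_of_eq ?_) hk1⟩
    have hkR : (0 : ℝ) < k := by exact_mod_cast hk2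
    rw [show -(p - 1) = -p + 1 by ring, Real.rpow_add_one hkR.ne']
    ring
  have hkR : (0 : ℝ) < k := by exact_mod_cast hk
  set M : ℝ := 3 ^ p * (4 * (6 * 4 ^ (n + 1) + 2) * 4 ^ k) ^ (p - 1) * 4 with hM
  have hM0 : 0 < M := by positivity
  set κ : ℝ := min 1 (min (c / (8 * 6 ^ p * 2 ^ (n + 2))) (c / (4 * M))) with hκ
  have hκ0 : 0 < κ := lt_min one_pos (lt_min (by positivity) (by positivity))
  have hκ1 : 6 ^ p * (2 ^ (n + 2) * κ + c₀) ≤ c / 4 := by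
    have h1 : κ ≤ c / (8 * 6 ^ p * 2 ^ (n + 2)) := (min_le_right _ _).trans (min_le_left _ _)
    calc 6 ^ p * (2 ^ (n + 2) * κ + c₀)
        ≤ 6 ^ p * (2 ^ (n + 2) * (c / (8 * 6 ^ p * 2 ^ (n + 2))) + c₀) := by gcongr
      _ = c / 4 := by rw [hc₀def]; field_simp; norm_num
  have hκ2 : M * κ ≤ c / 4 := by
    have h1 : κ ≤ c / (4 * M) := (min_le_right _ _).trans (min_le_right _ _)
    calc M * κ ≤ M * (c / (4 * M)) := by gcongr
      _ = c / 4 := by field_simp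
  set ε : ℝ := min ((p - 1) / 2) (1 / (2 * k)) with hε
  have hε0 : 0 < ε := lt_min (by linarith) (by positivity)
  have hε1 : ε < p - 1 := lt_of_le_of_lt (min_le_left _ _) (by linarith)
  have hε2 : ((2 : ℝ) ^ (p - (p - ε))) ^ (2 * k) ≤ 2 := by
    rw [sub_sub_cancel, ← Real.rpow_natCast, ← Real.rpow_mul two_pos.le]
    calc (2 : ℝ) ^ (ε * (2 * k : ℕ)) ≤ 2 ^ (1 : ℝ) := by
          refine Real.rpow_le_rpow_of_exponent_le one_le_two ?_
          push_cast
          calc ε * (2 * k) ≤ 1 / (2 * k) * (2 * k) := by gcongr; exact min_le_right _ _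
            _ = 1 := by field_simp
      _ = 2 := Real.rpow_one 2
  set s : ℝ := p - ε with hs
  have hs1 : 1 < s := by linarith
  set τ : ℝ := κ * 32 with hτ
  have hτ0 : 0 < τ := by positivity
  have hb1 : 1 < (2 : ℝ) ^ (s - 1) := Real.one_lt_rpow one_lt_two (by linarith)
  have hb0 : 0 < (2 : ℝ) ^ (s - 1) - 1 := by linarith
  set C : ℝ := 5 ^ n * (2 / τ) * (2 ^ (s - 1) / (2 ^ (s - 1) - 1) * (2 / τ) ^ (s - 1)) with hC
  have hC0 : 0 < C := by positivity
  refine ⟨ε, 3 * C, hε0, hε1, by positivity, ?_⟩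
  rintro F hF f ⟨K, hf⟩ hf0 hf1 hfF
  set a : ℕ → ENNReal := fun i => volume (fatSet F f (32 * 2 ^ i)) with ha
  set b : ℕ → ENNReal := fun i => volume (maxSet f (τ * 2 ^ i)) with hb
  have hrec : ∀ i, a i ≤ b i + ENNReal.ofReal (5 ^ n * (D * (k : ℝ) ^ (-p))) *
      ∑ j ∈ Finset.Ico k (2 * k),
        ENNReal.ofReal (((2 : ℝ) ^ p) ^ j) * (b (i + j) + a (i + j)) := by
    intro i
    have h1 : (1 : ℝ) ≤ 2 ^ i := one_le_pow₀ one_le_two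
    have h := volume_fatSet_le hn hp hc hF hf hf0 hf1 hfF hk (lam := 32 * 2 ^ i) (by linarith)
      hc₀ hκ1 hκ2 hD
    refine h.trans ?_
    rw [show κ * (32 * 2 ^ i) = τ * 2 ^ i by rw [hτ]; ring]
    refine add_le_add le_rfl ?_
    gcongr with j hj
    · refine measure_mono (maxSet_anti f ?_)
      rw [pow_add, hτ]
      have h2 : κ ≤ 1 := min_le_left _ _
      have h3 : (0 : ℝ) < 32 * 2 ^ i * 2 ^ j := by positivity
      nlinarith
    · simp only [ha]
      rw [pow_add, mul_assoc]
  have hfin : ∑' i, ENNReal.ofReal (((2 : ℝ) ^ s) ^ i) * a i ≠ ⊤ := by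
    obtain ⟨N, hN⟩ := pow_unbounded_of_one_lt (K : ℝ) one_lt_two
    rw [tsum_eq_sum (s := Finset.range N) fun i hi => ?_]
    · refine (ENNReal.sum_lt_top.2 fun i _ => ENNReal.mul_lt_top ENNReal.ofReal_lt_top ?_).ne
      exact (measure_mono (fatSet_subset_ball hf hf1 (by positivity))).trans_lt measure_ball_lt_top
    · rw [Finset.mem_range, not_lt] at hi
      have h1 : (2 : ℝ) ^ N ≤ 2 ^ i := pow_le_pow_right₀ one_le_two hi
      have h2 : (0 : ℝ) < 2 ^ i := by positivity
      simp only [ha]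
      rw [fatSet_eq_empty hf hfF (by positivity) (by linarith), measure_empty, mul_zero]
  have hA := tsum_le_three_mul_tsum (by linarith) hε2 (by positivity) hkD hrec hfin
  calc volume (fatSet F f 32) = ENNReal.ofReal (((2 : ℝ) ^ s) ^ 0) * a 0 := by simp [ha]
    _ ≤ ∑' i, ENNReal.ofReal (((2 : ℝ) ^ s) ^ i) * a i := ENNReal.le_tsum 0
    _ ≤ 3 * ∑' i, ENNReal.ofReal (((2 : ℝ) ^ s) ^ i) * b i := hA
    _ ≤ 3 * (ENNReal.ofReal C * ∫⁻ x, ENNReal.ofReal (gnorm f x ^ s)) := by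
        gcongr
        exact tsum_volume_maxSet_le hf hs1 hτ0
    _ = _ := by
        rw [ENNReal.ofReal_mul (p := 3) (q := C) (by norm_num), ENNReal.ofReal_ofNat, mul_assoc]

lemma le_add_rpow_mul_rpow {δ s y : ℝ} (hδ : 0 < δ) (hs : 1 < s) (hy : 0 ≤ y) :
    y ≤ δ + δ ^ (1 - s) * y ^ s := by
  rcases le_or_gt y δ with h | h
  · have : 0 ≤ δ ^ (1 - s) * y ^ s := by positivity
    linarith
  · have hy0 : 0 < y := hδ.trans h
    calc y = y ^ (1 - s) * y ^ s := by
          rw [← Real.rpow_add hy0, sub_add_cancel, Real.rpow_one]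
      _ ≤ δ ^ (1 - s) * y ^ s := by
          gcongr ?_ * _
          exact Real.rpow_le_rpow_of_nonpos hδ h.le (by linarith)
      _ ≤ _ := by linarith

lemma lintegral_gnorm_le {n : ℕ} (hn : 0 < n) {f : En n → ℝ} {K : NNReal}
    (hf : LipschitzWith K f) (hf1 : ∀ x ∉ ball 0 1, f x = 1) {δ s : ℝ} (hδ : 0 < δ) (hs : 1 < s) :
    ∫⁻ x, ENNReal.ofReal (gnorm f x) ≤ ENNReal.ofReal δ * volume (ball (0 : En n) 1) +
      ENNReal.ofReal (δ ^ (1 - s)) * ∫⁻ x, ENNReal.ofReal (gnorm f x ^ s) := by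
  have h0 := ae_gnorm_eq_of_eqOn hn hf (LipschitzWith.const (1 : ℝ))
    (measurableSet_ball (x := (0 : En n)) (ε := 1)).compl (fun x hx => hf1 x hx)
  have hm : Measurable (gnorm f) := measurable_gnorm f
  calc ∫⁻ x, ENNReal.ofReal (gnorm f x)
      ≤ ∫⁻ x, ((ball (0 : En n) 1).indicator (fun _ => ENNReal.ofReal δ) x +
          ENNReal.ofReal (δ ^ (1 - s)) * ENNReal.ofReal (gnorm f x ^ s)) := by
        refine lintegral_mono_ae ?_
        filter_upwards [h0] with x hx
        by_cases hxb : x ∈ ball (0 : En n) 1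
        · rw [indicator_of_mem hxb, ← ENNReal.ofReal_mul (by positivity),
            ← ENNReal.ofReal_add hδ.le (by have := gnorm_nonneg f x; positivity)]
          exact ENNReal.ofReal_le_ofReal (le_add_rpow_mul_rpow hδ hs (gnorm_nonneg f x))
        · have : gnorm f x = 0 := by rw [hx hxb]; simp [gnorm]
          simp [this]
    _ = _ := by
        rw [lintegral_add_left (measurable_const.indicator measurableSet_ball),
          lintegral_indicator measurableSet_ball, setLIntegral_const,
          lintegral_const_mul _ (by fun_prop)]

lemma setIntegral_one_sub_le {n : ℕ} (hn : 0 < n) {f : En n → ℝ} {K : NNReal}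
    (hf : LipschitzWith K f) (hf0 : ∀ x, f x ≤ 1) (hf1 : ∀ x ∉ ball 0 1, f x = 1) {r : ℝ}
    (hr : r ≤ 1) :
    ENNReal.ofReal (∫ x in ball 0 r, (1 - f x)) ≤
      ENNReal.ofReal 2 * ∫⁻ x, ENNReal.ofReal (gnorm f x) := by
  set h : En n := EuclideanSpace.single ⟨0, hn⟩ 2 with hh
  have hhn : ‖h‖ = 2 := by simp [hh]
  have h1 := lintegral_translate_sub_le hf h MeasurableSet.univ convex_univ
  have hcont : Continuous fun x => 1 - f x := continuous_const.sub hf.continuous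
  simp only [mem_univ, and_self, ofPred_true, Measure.restrict_univ, enorm_fderiv_eq] at h1
  rw [← ofReal_norm, hhn] at h1
  refine le_trans ?_ h1
  rw [ofReal_integral_eq_lintegral_ofReal (continuous_integrableOn_ball hcont 0 r)
    (Filter.Eventually.of_forall fun x => sub_nonneg.2 (hf0 x))]
  refine le_trans (setLIntegral_mono' measurableSet_ball fun x hx => ?_)
    (setLIntegral_le_lintegral (ball 0 r) _)
  rw [hf1 (x + h), ← ofReal_norm, Real.norm_eq_abs]
  · exact ENNReal.ofReal_le_ofReal (le_abs_self _)
  · rw [mem_ball_zero_iff, not_lt]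
    have h2 : ‖h‖ ≤ ‖x + h‖ + ‖x‖ := by
      calc ‖h‖ = ‖(x + h) - x‖ := by congr 1; abel
        _ ≤ _ := norm_sub_le _ _
    have h3 := mem_ball_zero_iff.1 hx
    linarith

/-- A function vanishing on a uniformly `p`-fat set near the origin and equal to `1` off the unit
ball has gradient bounded below in some `L^s` with `s < p`. -/
lemma exists_le_lintegral_gnorm_rpow (n : ℕ) (hn : 0 < n) {p c : ℝ} (hp : 1 < p) (hc : 0 < c) :
    ∃ ε c' : ℝ, 0 < ε ∧ ε < p - 1 ∧ 0 < c' ∧ ∀ F : Set (En n), 0 ∈ F → UniformPFat F p c →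
      ∀ f : En n → ℝ, (∃ K, LipschitzWith K f) → (∀ x, 0 ≤ f x) → (∀ x, f x ≤ 1) →
        (∀ x ∈ F ∩ closedBall 0 (1 / 2), f x = 0) → (∀ x ∉ ball 0 1, f x = 1) →
          ENNReal.ofReal c' ≤ ∫⁻ x, ENNReal.ofReal (gnorm f x ^ (p - ε)) := by
  obtain ⟨ε, C, hε0, hε1, hC, H⟩ := exists_volume_fatSet_le_lintegral n hn hp hc
  set V₀ : ℝ := volume.real (ball (0 : En n) (1 / 128)) with hV₀
  set V₁ : ℝ := volume.real (ball (0 : En n) 1) with hV₁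
  have hV₀0 : 0 < V₀ := volume_ball_pos 0 (by norm_num)
  have hV₁0 : 0 < V₁ := volume_ball_pos 0 one_pos
  set δ : ℝ := V₀ / (8 * V₁) with hδ
  have hδ0 : 0 < δ := by positivity
  set T : ℝ := δ ^ (1 - (p - ε)) with hT
  have hT0 : 0 < T := by positivity
  refine ⟨ε, min (V₀ / C) (V₀ / (4 * T)), hε0, hε1, lt_min (by positivity) (by positivity), ?_⟩
  rintro F h0F hF f ⟨K, hf⟩ hf0 hf1 hfF hfb
  have hfat := H F hF f ⟨K, hf⟩ hf0 hf1 hfF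
  have hgr := lintegral_gnorm_le hn hf hfb hδ0 (s := p - ε) (by linarith)
  have hone := setIntegral_one_sub_le hn hf hf1 hfb (r := 1 / 128) (by norm_num)
  generalize (∫⁻ x, ENNReal.ofReal (gnorm f x ^ (p - ε))) = I at *
  by_cases hI : I = ⊤
  · rw [hI]; exact le_top
  rw [← ENNReal.ofReal_toReal hI] at hfat hgr ⊢
  have hI0 : 0 ≤ I.toReal := ENNReal.toReal_nonneg
  refine ENNReal.ofReal_le_ofReal ?_
  have hVt : volume (ball (0 : En n) (1 / 128)) ≠ ⊤ := measure_ball_lt_top.ne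
  have hVt1 : volume (ball (0 : En n) 1) ≠ ⊤ := measure_ball_lt_top.ne
  by_cases hcase : 1 / 4 * V₀ < ∫ x in ball (0 : En n) (1 / 128), f x
  · refine (min_le_left _ _).trans ?_
    have hsub : ball (0 : En n) (1 / 128) ⊆ fatSet F f 32 := fun x hx =>
      ⟨0, h0F, by norm_num, 1 / 128, by norm_num, hx, by
        rw [show (32 : ℝ) * (1 / 128) = 1 / 4 by norm_num]; exact hcase⟩
    have h1 := (measure_mono hsub).trans hfat
    rw [← ofReal_measureReal hVt, ← ENNReal.ofReal_mul hC.le,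
      ENNReal.ofReal_le_ofReal_iff (by positivity)] at h1
    rw [div_le_iff₀ hC]; linarith
  · refine (min_le_right _ _).trans ?_
    have : IsFiniteMeasure (volume.restrict (ball (0 : En n) (1 / 128))) :=
      isFiniteMeasure_restrict.2 hVt
    rw [integral_sub (integrable_const _) (continuous_integrableOn_ball hf.continuous _ _),
      setIntegral_const, smul_eq_mul, mul_one, ← hV₀] at hone
    have h1 := hone.trans (mul_le_mul' le_rfl hgr)
    rw [← ofReal_measureReal hVt1, ← hV₁, ← ENNReal.ofReal_mul hδ0.le, ← ENNReal.ofReal_mul hT0.le,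
      ← ENNReal.ofReal_add (by positivity) (by positivity),
      ← ENNReal.ofReal_mul two_pos.le, ENNReal.ofReal_le_ofReal_iff (by positivity)] at h1
    have h2 : δ * V₁ = V₀ / 8 := by rw [hδ]; field_simp
    rw [h2] at h1
    rw [div_le_iff₀ (by positivity)]
    linarith

lemma gnorm_smul {n : ℕ} (t : ℝ) (u : En n → ℝ) (x : En n) :
    gnorm (t • u) x = |t| * gnorm u x := by
  rw [gnorm, fderiv_const_smul_field, Pi.smul_apply, norm_smul, Real.norm_eq_abs, gnorm]

lemma aInfOn_nonneg {n : ℕ} {b : En n → ℝ} (hb : ∀ x, 0 ≤ b x) (O : Set (En n)) :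
    0 ≤ aInfOn b O :=
  Real.sInf_nonneg (by rintro _ ⟨x, -, rfl⟩; exact hb x)

lemma aInfOn_le {n : ℕ} {b : En n → ℝ} (hb : ∀ x, 0 ≤ b x) {O : Set (En n)} {x : En n}
    (hx : x ∈ O) : aInfOn b O ≤ b x :=
  csInf_le ⟨0, by rintro _ ⟨y, -, rfl⟩; exact hb y⟩ (mem_image_of_mem b hx)

lemma phi_nonneg {n : ℕ} {b : En n → ℝ} (hb : ∀ x, 0 ≤ b x) (p q : ℝ) (x : En n) {t : ℝ}
    (ht : 0 ≤ t) : 0 ≤ phi b p q x t := by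
  have := hb x
  unfold phi; positivity

lemma rpow_le_phiMinus {n : ℕ} {b : En n → ℝ} (hb : ∀ x, 0 ≤ b x) (p q : ℝ) (O : Set (En n))
    {t : ℝ} (ht : 0 ≤ t) : t ^ p ≤ phiMinus b p q O t := by
  have := aInfOn_nonneg hb O
  have : 0 ≤ aInfOn b O * t ^ q := by positivity
  unfold phiMinus; linarith

lemma capPhiInf_le {n : ℕ} {b : En n → ℝ} (hb : ∀ x, 0 ≤ b x) (p q : ℝ) (E O : Set (En n)) {t : ℝ}
    (ht : 0 < t) {u : En n → ℝ} (hu : u ∈ Adm E O t) :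
    capPhiInf b p q E O ≤ ∫ x in O, phi b p q x (gnorm u x) / phiMinus b p q O t := by
  have hpos : ∀ s : ℝ, 0 < s → ∀ y ∈ (fun u => ∫ x in O, phi b p q x (gnorm u x) /
      phiMinus b p q O s) '' Adm E O s, 0 ≤ y := by
    rintro s hs _ ⟨v, -, rfl⟩
    refine integral_nonneg fun x => div_nonneg (phi_nonneg hb p q x (gnorm_nonneg v x)) ?_
    exact (Real.rpow_nonneg hs.le p).trans (rpow_le_phiMinus hb p q O hs.le)
  calc capPhiInf b p q E O ≤ capPhiLevel b p q t E O :=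
        ciInf_le (f := fun t : Ioi (0 : ℝ) => capPhiLevel b p q (t : ℝ) E O)
          ⟨0, by rintro _ ⟨s, rfl⟩; exact Real.sInf_nonneg (hpos s s.2)⟩ ⟨t, ht⟩
    _ ≤ _ := csInf_le ⟨0, hpos t ht⟩ (mem_image_of_mem _ hu)

lemma capPhiInf_le_integral_rpow {n : ℕ} {b : En n → ℝ} (hb : ∀ x, 0 ≤ b x) {p q M : ℝ}
    (hp : 1 < p) (hpq : p < q) {E : Set (En n)} (hM : ∀ x ∈ ball (0 : En n) 1, b x ≤ M)
    {V : En n → ℝ} {K : NNReal} (hV : LipschitzWith K V) (hVE : ∀ x ∈ E, 1 ≤ V x)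
    (hV0 : ∀ x ∈ frontier (ball (0 : En n) 1), V x = 0) :
    capPhiInf b p q E (ball 0 1) ≤ ∫ x in ball (0 : En n) 1, gnorm V x ^ p := by
  have hfin : IsFiniteMeasure (volume.restrict (ball (0 : En n) 1)) :=
    isFiniteMeasure_restrict.2 measure_ball_lt_top.ne
  have hM0 : 0 ≤ M := (hb 0).trans (hM 0 (mem_ball_self one_pos))
  have h_int : IntegrableOn (fun x => gnorm V x ^ p) (ball 0 1) := by
    refine Measure.integrableOn_of_bounded (M := (K : ℝ) ^ p) measure_ball_lt_top.ne
      ((measurable_gnorm V).pow_const p).aestronglyMeasurable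
      (Filter.Eventually.of_forall fun x => ?_)
    rw [Real.norm_of_nonneg (Real.rpow_nonneg (gnorm_nonneg V x) p)]
    exact Real.rpow_le_rpow (gnorm_nonneg V x) (gnorm_le hV x) (by linarith)
  set I := ∫ x in ball (0 : En n) 1, gnorm V x ^ p with hI
  set D : ℝ := volume.real (ball (0 : En n) 1) * (M * (K : ℝ) ^ q) with hD
  have hbound : ∀ t : ℝ, 0 < t → capPhiInf b p q E (ball 0 1) ≤ I + t ^ (q - p) * D := by
    intro t ht
    have hadm : t • V ∈ Adm E (ball 0 1) t := by
      refine ⟨⟨_, ((lipschitzWith_smul t).comp hV).lipschitzOnWith⟩, fun x hx => ?_, fun x hx => ?_⟩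
      · have := hVE x hx
        rw [Pi.smul_apply, smul_eq_mul]; nlinarith
      · rw [Pi.smul_apply, hV0 x hx, smul_zero]
    refine (capPhiInf_le hb p q E _ ht hadm).trans ?_
    have hI2 : I + t ^ (q - p) * D =
        ∫ x in ball (0 : En n) 1, (gnorm V x ^ p + t ^ (q - p) * (M * (K : ℝ) ^ q)) := by
      rw [integral_add h_int (integrable_const _), setIntegral_const, smul_eq_mul, hD]; ring
    rw [hI2]
    have htp : 0 < t ^ p := by positivity
    have hden := rpow_le_phiMinus hb p q (ball 0 1) ht.le
    refine integral_mono_of_nonneg (Filter.Eventually.of_forall fun x => ?_)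
      (h_int.add (integrable_const _)) ?_
    · exact div_nonneg (phi_nonneg hb p q x (gnorm_nonneg _ x)) (htp.le.trans hden)
    · filter_upwards [ae_restrict_mem measurableSet_ball] with x hx
      have hg0 := gnorm_nonneg V x
      have hbx := hb x
      calc phi b p q x (gnorm (t • V) x) / phiMinus b p q (ball 0 1) t
          ≤ phi b p q x (gnorm (t • V) x) / t ^ p := by
            gcongr
            exact phi_nonneg hb p q x (gnorm_nonneg _ x)
        _ = gnorm V x ^ p + t ^ (q - p) * (b x * gnorm V x ^ q) := by
            rw [phi, gnorm_smul, abs_of_pos ht, Real.mul_rpow ht.le hg0, Real.mul_rpow ht.le hg0,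
              Real.rpow_sub ht]
            field_simp
        _ ≤ _ := by
            gcongr
            · exact hM x hx
            · linarith
            · exact gnorm_le hV x
  have hlim : Filter.Tendsto (fun t : ℝ => I + t ^ (q - p) * D) (nhdsWithin 0 (Ioi 0))
      (nhds (I + 0 * D)) := by
    refine Filter.Tendsto.const_add _ (Filter.Tendsto.mul_const _ ?_)
    have h := (Real.continuousAt_rpow_const 0 (q - p) (Or.inr (by linarith))).tendsto
    rw [Real.zero_rpow (by linarith)] at h
    exact h.mono_left nhdsWithin_le_nhds
  rw [zero_mul, add_zero] at hlim
  exact ge_of_tendsto hlim (by filter_upwards [self_mem_nhdsWithin] with t ht using hbound t ht)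

lemma gnorm_comp_add_smul {n : ℕ} (v : En n → ℝ) (z : En n) {ρ : ℝ} (hρ : 0 ≤ ρ) (x : En n) :
    gnorm (fun y => v (z + ρ • y)) x = ρ * gnorm v (z + ρ • x) := by
  have h := fderiv_comp_smul (𝕜 := ℝ) (f := fun y => v (z + y)) (x := x) ρ
  rw [gnorm, h, fderiv_comp_add_left, norm_smul, Real.norm_of_nonneg hρ, gnorm]

lemma setIntegral_comp_add_smul {n : ℕ} (h : En n → ℝ) (z : En n) {ρ : ℝ} (hρ : 0 < ρ) :
    ρ ^ n * ∫ x in ball (0 : En n) 1, h (z + ρ • x) = ∫ x in ball z ρ, h x := by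
  rw [Measure.setIntegral_comp_smul_of_pos volume (fun y => h (z + y)) _ hρ,
    smul_unitBall_of_pos hρ, finrank_euclideanSpace_fin, smul_eq_mul,
    mul_inv_cancel_left₀ (by positivity)]
  have := (measurePreserving_add_left volume z).setIntegral_preimage_emb
    (measurableEmbedding_addLeft z) h (ball z ρ)
  rwa [preimage_add_ball, sub_self] at this

lemma uniformPFat_of_locUnifPhiFat {n : ℕ} {a : En n → ℝ} (ha : ∀ x, 0 ≤ a x) {p q cfat ro A α : ℝ}
    (hp : 1 < p) (hpq : p < q) (hA : 0 ≤ A) (hα : 0 < α)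
    (haA : ∀ x y, |a x - a y| ≤ A * dist x y ^ α) {E : Set (En n)}
    (hE : LocUnifPhiFat a p q E cfat ro) {z : En n} {r : ℝ} (hr : 0 < r) (hro : r < ro) :
    UniformPFat {x | z + r • x ∈ E} p (cfat / volume.real (ball (0 : En n) 1)) := by
  rintro z' hz' ρ hρ hρ1 v ⟨K, hv⟩ hvF hv0
  have hV1 := volume_ball_pos (0 : En n) one_pos
  have hrρ : r * ρ < ro := lt_of_lt_of_le (mul_lt_of_lt_one_right hr hρ1) hro.le
  have hfat := hE (z + r • z') hz' (r * ρ) (by positivity) hrρ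
  have hd : ∀ x : En n, dist (z' + ρ • x) z' = ρ * ‖x‖ := fun x => by
    rw [dist_eq_norm, add_sub_cancel_left, norm_smul, Real.norm_of_nonneg hρ.le]
  have hlip : LipschitzWith (K * ‖ρ‖₊) fun y => v (z' + ρ • y) := by
    refine hv.comp ?_
    have := (LipschitzWith.const (α := En n) z').add (lipschitzWith_smul (β := En n) ρ)
    rwa [zero_add] at this
  have hcap := capPhiInf_le_integral_rpow (b := fun x => a (z + r • z' + (r * ρ) • x))
    (M := a (z + r • z') + A * (r * ρ) ^ α) (E := shiftedSet E (z + r • z') (r * ρ))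
    (fun x => ha _) hp hpq
    (fun x hx => by
      have h1 := haA (z + r • z' + (r * ρ) • x) (z + r • z')
      have h2 : dist (z + r • z' + (r * ρ) • x) (z + r • z') ≤ r * ρ := by
        rw [dist_eq_norm, add_sub_cancel_left, norm_smul, Real.norm_of_nonneg (by positivity)]
        exact mul_le_of_le_one_right (by positivity) (mem_ball_zero_iff.1 hx).le
      have h3 : A * dist (z + r • z' + (r * ρ) • x) (z + r • z') ^ α ≤ A * (r * ρ) ^ α := by gcongr
      have h4 := (le_abs_self _).trans (h1.trans h3)
      linarith) hlip
    (fun x hx => by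
      refine hvF _ ⟨?_, ?_⟩
      · have h1 := hx.2
        rwa [mul_smul, add_assoc, ← smul_add] at h1
      · have h1 : ‖x‖ ≤ 1 / 2 := mem_closedBall_zero_iff.1 hx.1
        rw [mem_closedBall, hd]; nlinarith)
    (fun x hx => by
      refine hv0 _ ?_
      have h1 : ‖x‖ = 1 := mem_sphere_zero_iff_norm.1 (frontier_ball_subset_sphere hx)
      rw [mem_ball, hd, h1, mul_one]; exact lt_irrefl _)
  have h1 := hfat.trans hcap
  simp only [gnorm_comp_add_smul v z' hρ.le, Real.mul_rpow hρ.le (gnorm_nonneg v _)] at h1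
  rw [integral_const_mul] at h1
  rw [← setIntegral_comp_add_smul _ z' hρ]
  have h2 : volume.real (ball z' ρ) = ρ ^ n * volume.real (ball (0 : En n) 1) := by
    have := volume_real_ball_mul z' (0 : En n) (ρ := 1) hρ
    rwa [mul_one] at this
  rw [h2]
  calc cfat / volume.real (ball (0 : En n) 1) * (ρ ^ n * volume.real (ball (0 : En n) 1))
      = ρ ^ n * cfat := by field_simp
    _ ≤ ρ ^ n * _ := by gcongr
    _ = _ := mul_left_comm _ _ _

/-- An admissible function coincides in the unit ball with a global Lipschitz function, and its
normalized truncation extends by zero. -/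
lemma exists_truncation_of_mem_Adm {n : ℕ} (hn : 0 < n) {E : Set (En n)} {t : ℝ} (ht : 0 < t)
    {u : En n → ℝ} (hu : u ∈ Adm E (ball 0 1) t) (hE : E ⊆ ball 0 1) :
    ∃ (U w : En n → ℝ) (K L : NNReal), LipschitzWith K U ∧ LipschitzWith L w ∧
      (∀ x ∈ ball (0 : En n) 1, gnorm u x = gnorm U x) ∧ (∀ x, 0 ≤ w x) ∧ (∀ x, w x ≤ 1) ∧
      (∀ x ∈ E, w x = 1) ∧ (∀ x ∉ ball 0 1, w x = 0) ∧
      ∀ᵐ x, gnorm w x ≤ (ball (0 : En n) 1).indicator (fun x => gnorm U x / t) x := by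
  obtain ⟨⟨K, hK⟩, huE, hu0⟩ := hu
  obtain ⟨U, hU, hUu⟩ := hK.extend_real
  rw [closure_ball _ one_ne_zero] at hUu
  rw [frontier_ball _ one_ne_zero] at hu0
  have htop : ∀ x : En n, ‖x‖ ≤ 1 → U x ≤ K * (1 - ‖x‖) := by
    intro x hx
    obtain ⟨y, hy, hxy⟩ : ∃ y : En n, ‖y‖ = 1 ∧ dist x y = 1 - ‖x‖ := by
      by_cases hx0 : x = 0
      · refine ⟨EuclideanSpace.single ⟨0, hn⟩ 1, by simp, by simp [hx0]⟩
      · have hxn : 0 < ‖x‖ := norm_pos_iff.2 hx0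
        refine ⟨‖x‖⁻¹ • x, norm_smul_inv_norm hx0, ?_⟩
        have h1 : x - ‖x‖⁻¹ • x = (1 - ‖x‖⁻¹) • x := by rw [sub_smul, one_smul]
        have h2 : 1 ≤ ‖x‖⁻¹ := (one_le_inv₀ hxn).2 hx
        rw [dist_eq_norm, h1, norm_smul, Real.norm_of_nonpos (by linarith), neg_sub, sub_mul,
          one_mul, inv_mul_cancel₀ hxn.ne']
    have h1 := hU.dist_le_mul x y
    have h2 : U y = 0 := by
      rw [← hUu (mem_closedBall_zero_iff.2 hy.le)]
      exact hu0 y (mem_sphere_zero_iff_norm.2 hy)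
    rw [h2, Real.dist_0_eq_abs, hxy] at h1
    exact (le_abs_self _).trans h1
  set w : En n → ℝ := fun x => max (min (min (t⁻¹ * U x) (t⁻¹ * K * (1 - ‖x‖))) 1) 0 with hw
  have hUt : LipschitzWith (‖t⁻¹‖₊ * K) (t⁻¹ • U) := (lipschitzWith_smul t⁻¹).comp hU
  have hdist : LipschitzWith (‖t⁻¹ * K‖₊ * (0 + 1)) fun x : En n => t⁻¹ * K * (1 - ‖x‖) :=
    (lipschitzWith_smul (t⁻¹ * (K : ℝ))).comp
      ((LipschitzWith.const (1 : ℝ)).sub lipschitzWith_one_norm)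
  have hwL := ((hUt.min hdist).min_const 1).max_const 0
  have hwin : ∀ x ∈ ball (0 : En n) 1, w x = max (min (t⁻¹ * U x) 1) 0 := by
    intro x hx
    have h1 := htop x (mem_ball_zero_iff.1 hx).le
    have h2 : t⁻¹ * U x ≤ t⁻¹ * K * (1 - ‖x‖) := by
      rw [mul_assoc]; gcongr
    simp only [hw, min_eq_left h2]
  have hwout : ∀ x ∉ ball (0 : En n) 1, w x = 0 := by
    intro x hx
    rw [mem_ball_zero_iff, not_lt] at hx
    have h2 : t⁻¹ * K * (1 - ‖x‖) ≤ 0 :=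
      mul_nonpos_of_nonneg_of_nonpos (by positivity) (by linarith)
    exact max_eq_right ((min_le_left _ _).trans ((min_le_right _ _).trans h2))
  have hgw : ∀ x ∈ ball (0 : En n) 1, gnorm u x = gnorm U x := by
    intro x hx
    have : u =ᶠ[nhds x] U := by
      filter_upwards [isOpen_ball.mem_nhds hx] with y hy using hUu (ball_subset_closedBall hy)
    rw [gnorm, this.fderiv_eq, gnorm]
  refine ⟨U, w, K, _, hU, hwL, hgw, fun x => le_max_right _ _,
    fun x => max_le (min_le_right _ _) zero_le_one, fun x hx => ?_, hwout, ?_⟩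
  · rw [hwin x (hE hx), ← hUu (ball_subset_closedBall (hE hx))]
    have h1 : 1 ≤ t⁻¹ * u x := by
      rw [inv_mul_eq_div, le_div_iff₀ ht, one_mul]; exact huE x hx
    rw [min_eq_right h1, max_eq_left zero_le_one]
  · have hUm : Measurable fun x => t⁻¹ * U x := (hU.continuous.measurable).const_mul _
    have hb : MeasurableSet (ball (0 : En n) 1) := measurableSet_ball
    have m1 : MeasurableSet {x | x ∈ ball (0 : En n) 1 ∧ 0 ≤ t⁻¹ * U x ∧ t⁻¹ * U x ≤ 1} :=
      hb.inter ((measurableSet_le measurable_const hUm).inter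
        (measurableSet_le hUm measurable_const))
    have m2 : MeasurableSet {x | x ∈ ball (0 : En n) 1 ∧ t⁻¹ * U x ≤ 0} :=
      hb.inter (measurableSet_le hUm measurable_const)
    have m3 : MeasurableSet {x | x ∈ ball (0 : En n) 1 ∧ 1 ≤ t⁻¹ * U x} :=
      hb.inter (measurableSet_le measurable_const hUm)
    have a1 := ae_gnorm_eq_of_eqOn hn hwL hUt m1 (fun x hx => by
      change w x = t⁻¹ * U x
      rw [hwin x hx.1, min_eq_left hx.2.2, max_eq_left hx.2.1])
    have a2 := ae_gnorm_eq_of_eqOn hn hwL (LipschitzWith.const (0 : ℝ)) m2 (fun x hx => by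
      change w x = 0
      rw [hwin x hx.1, max_eq_right ((min_le_left _ _).trans hx.2)])
    have a3 := ae_gnorm_eq_of_eqOn hn hwL (LipschitzWith.const (1 : ℝ)) m3 (fun x hx => by
      change w x = 1
      rw [hwin x hx.1, min_eq_right hx.2, max_eq_left zero_le_one])
    have a4 := ae_gnorm_eq_of_eqOn hn hwL (LipschitzWith.const (0 : ℝ)) hb.compl hwout
    filter_upwards [a1, a2, a3, a4] with x h1 h2 h3 h4
    have hzero : ∀ s : ℝ, gnorm (fun _ : En n => s) x = 0 := fun s => by simp [gnorm]
    change gnorm w x ≤ _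
    by_cases hx : x ∈ ball (0 : En n) 1
    · rw [indicator_of_mem hx]
      have hpos : 0 ≤ gnorm U x / t := div_nonneg (gnorm_nonneg U x) ht.le
      rcases le_total (t⁻¹ * U x) 0 with hc | hc
      · rw [show gnorm w x = 0 from (h2 ⟨hx, hc⟩).trans (hzero 0)]; exact hpos
      rcases le_total (t⁻¹ * U x) 1 with hd | hd
      · rw [show gnorm w x = gnorm (t⁻¹ • U) x from h1 ⟨hx, hc, hd⟩, gnorm_smul,
          abs_of_pos (inv_pos.2 ht), inv_mul_eq_div]
      · rw [show gnorm w x = 0 from (h3 ⟨hx, hd⟩).trans (hzero 1)]; exact hpos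
    · rw [indicator_of_notMem hx, show gnorm w x = 0 from (h4 hx).trans (hzero 0)]

lemma mul_rpow_sub_le_phi_div {n : ℕ} {b : En n → ℝ} (hb : ∀ x, 0 ≤ b x) {p q γ δ t g : ℝ}
    (hp : 0 < p) (hpq : p < q) (hγ : 0 < γ) (hδ : 0 < δ) (hδ1 : δ ≤ 1) (ht : 0 < t) (hg : 0 ≤ g)
    {O : Set (En n)} {x : En n} (hx : x ∈ O) :
    δ ^ ((q - p) * γ) * ((g / t) ^ (p * γ) - δ ^ (p * γ)) ≤
      phi b p q x g ^ γ / phiMinus b p q O t ^ γ := by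
  have hm0 := aInfOn_nonneg hb O
  have hmx := aInfOn_le hb hx
  have htp : 0 < t ^ p := by positivity
  have hden : 0 < phiMinus b p q O t := htp.trans_le (rpow_le_phiMinus hb p q O ht.le)
  have hnum := phi_nonneg hb p q x hg
  set Y := g / t with hY
  have hY0 : 0 ≤ Y := div_nonneg hg ht.le
  rcases le_or_gt Y δ with h | h
  · have h1 : Y ^ (p * γ) ≤ δ ^ (p * γ) := by gcongr
    exact (mul_nonpos_of_nonneg_of_nonpos (Real.rpow_nonneg hδ.le _) (by linarith)).trans
      (by positivity)
  · have hYp : 0 < Y := hδ.trans h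
    have h1 : δ ^ (q - p) * Y ^ p ≤ Y ^ p :=
      mul_le_of_le_one_left (by positivity) (Real.rpow_le_one hδ.le hδ1 (by linarith))
    have h2 : δ ^ (q - p) * Y ^ p ≤ Y ^ q := by
      calc δ ^ (q - p) * Y ^ p ≤ Y ^ (q - p) * Y ^ p := by gcongr
        _ = Y ^ q := by rw [← Real.rpow_add hYp, sub_add_cancel]
    have hgY : g = t * Y := by rw [hY]; field_simp
    have hkey : δ ^ (q - p) * Y ^ p ≤ phi b p q x g / phiMinus b p q O t := by
      rw [le_div_iff₀ hden, phi, phiMinus, hgY, Real.mul_rpow ht.le hY0, Real.mul_rpow ht.le hY0]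
      have htq : 0 < t ^ q := by positivity
      calc δ ^ (q - p) * Y ^ p * (t ^ p + aInfOn b O * t ^ q)
          = t ^ p * (δ ^ (q - p) * Y ^ p) + aInfOn b O * (t ^ q * (δ ^ (q - p) * Y ^ p)) := by ring
        _ ≤ _ := by gcongr; exact hb x
    rw [← Real.div_rpow hnum hden.le]
    calc δ ^ ((q - p) * γ) * (Y ^ (p * γ) - δ ^ (p * γ))
        ≤ δ ^ ((q - p) * γ) * Y ^ (p * γ) := by
          gcongr
          have : 0 ≤ δ ^ (p * γ) := by positivity
          linarith
      _ = (δ ^ (q - p) * Y ^ p) ^ γ := by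
          rw [Real.mul_rpow (by positivity) (by positivity), ← Real.rpow_mul hδ.le,
            ← Real.rpow_mul hY0]
      _ ≤ _ := by gcongr

lemma Adm_nonempty {n : ℕ} {E : Set (En n)} (hE : E ⊆ closedBall 0 (1 / 2)) {t : ℝ} (ht : 0 < t) :
    (Adm E (ball (0 : En n) 1) t).Nonempty := by
  refine ⟨(2 * t) • fun x => 1 - ‖x‖, ⟨_, ((lipschitzWith_smul (2 * t)).comp
    ((LipschitzWith.const (1 : ℝ)).sub lipschitzWith_one_norm)).lipschitzOnWith⟩, ?_, ?_⟩
  · intro x hx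
    have := mem_closedBall_zero_iff.1 (hE hx)
    simp only [Pi.smul_apply, smul_eq_mul]
    nlinarith
  · intro x hx
    rw [frontier_ball _ one_ne_zero, mem_sphere_zero_iff_norm] at hx
    simp [hx]

lemma le_integral_phi_pow {n : ℕ} (hn : 0 < n) {b : En n → ℝ} (hb : ∀ x, 0 ≤ b x)
    (hbm : Measurable b) {M : ℝ} (hM : ∀ x ∈ ball (0 : En n) 1, b x ≤ M) {p q ε c' δ : ℝ}
    (hp : 1 < p) (hpq : p < q) (hε1 : ε < p - 1)
    (hδ : 0 < δ) (hδ1 : δ ≤ 1) (hδc : δ * volume.real (ball (0 : En n) 1) ≤ c' / 2)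
    {F : Set (En n)}
    (hF : ∀ f : En n → ℝ, (∃ K, LipschitzWith K f) → (∀ x, 0 ≤ f x) → (∀ x, f x ≤ 1) →
        (∀ x ∈ F ∩ closedBall 0 (1 / 2), f x = 0) → (∀ x ∉ ball 0 1, f x = 1) →
          ENNReal.ofReal c' ≤ ∫⁻ x, ENNReal.ofReal (gnorm f x ^ (p - ε)))
    {t : ℝ} (ht : 0 < t) {u : En n → ℝ}
    (hu : u ∈ Adm (F ∩ closedBall 0 (1 / 2)) (ball 0 1) t) :
    δ ^ ((q - p) * (1 - ε / p)) * (c' / 2) ≤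
      ∫ x in ball (0 : En n) 1,
        phi b p q x (gnorm u x) ^ (1 - ε / p) / phiMinus b p q (ball 0 1) t ^ (1 - ε / p) := by
  have hp0 : 0 < p := by linarith
  have hγs : p * (1 - ε / p) = p - ε := by field_simp
  have hγ : 0 < 1 - ε / p := by
    rw [sub_pos, div_lt_one hp0]; linarith
  set γ := 1 - ε / p with hγdef
  set s := p - ε with hs
  have hs1 : 1 < s := by linarith
  have hV1 := volume_ball_pos (0 : En n) one_pos
  have hfin : IsFiniteMeasure (volume.restrict (ball (0 : En n) 1)) :=
    isFiniteMeasure_restrict.2 measure_ball_lt_top.ne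
  obtain ⟨U, w, K, L, hU, hw, hug, hw0, hw1, hwE, hwout, hwg⟩ :=
    exists_truncation_of_mem_Adm hn ht hu
      (inter_subset_right.trans (closedBall_subset_ball (by norm_num)))
  have hlow := hF (fun x => 1 - w x)
    ⟨_, (LipschitzWith.const (1 : ℝ)).sub hw⟩ (fun x => sub_nonneg.2 (hw1 x))
    (fun x => by have := hw0 x; linarith) (fun x hx => by rw [hwE x hx, sub_self])
    (fun x hx => by rw [hwout x hx, sub_zero])
  have hUm := measurable_gnorm U
  have h_int : IntegrableOn (fun x => (gnorm U x / t) ^ s) (ball 0 1) := by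
    refine Measure.integrableOn_of_bounded (M := ((K : ℝ) / t) ^ s) measure_ball_lt_top.ne
      ((hUm.div_const t).pow_const s).aestronglyMeasurable
      (Filter.Eventually.of_forall fun x => ?_)
    have hg := gnorm_nonneg U x
    rw [Real.norm_of_nonneg (by positivity)]
    gcongr
    exact gnorm_le hU x
  have hc1 : c' ≤ ∫ x in ball (0 : En n) 1, (gnorm U x / t) ^ s := by
    have hnn : ∀ x, 0 ≤ (gnorm U x / t) ^ s := fun x => by
      have hg := gnorm_nonneg U x
      positivity
    rw [← ENNReal.ofReal_le_ofReal_iff (integral_nonneg hnn),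
      ofReal_integral_eq_lintegral_ofReal h_int (Filter.Eventually.of_forall hnn),
      ← lintegral_indicator measurableSet_ball]
    refine hlow.trans (lintegral_mono_ae ?_)
    filter_upwards [hwg] with x hx
    have h1 : gnorm (fun x => 1 - w x) x = gnorm w x := by
      rw [gnorm, fderiv_const_sub, norm_neg, gnorm]
    rw [h1]
    by_cases hxb : x ∈ ball (0 : En n) 1
    · rw [indicator_of_mem hxb] at hx ⊢
      exact ENNReal.ofReal_le_ofReal (Real.rpow_le_rpow (gnorm_nonneg w x) hx (by linarith))
    · rw [indicator_of_notMem hxb] at hx ⊢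
      rw [le_antisymm hx (gnorm_nonneg w x), Real.zero_rpow (by linarith), ENNReal.ofReal_zero]
  have hM0 : 0 ≤ M := (hb 0).trans (hM 0 (mem_ball_self one_pos))
  have hden : 0 < phiMinus b p q (ball 0 1) t :=
    (Real.rpow_pos_of_pos ht p).trans_le (rpow_le_phiMinus hb p q _ ht.le)
  have h_int2 : IntegrableOn
      (fun x => phi b p q x (gnorm U x) ^ γ / phiMinus b p q (ball 0 1) t ^ γ) (ball 0 1) := by
    refine Measure.integrableOn_of_bounded
      (M := ((K : ℝ) ^ p + M * (K : ℝ) ^ q) ^ γ / phiMinus b p q (ball 0 1) t ^ γ)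
      measure_ball_lt_top.ne ?_ ?_
    · refine (Measurable.div_const (Measurable.pow_const ?_ γ) _).aestronglyMeasurable
      exact (hUm.pow_const p).add (hbm.mul (hUm.pow_const q))
    · filter_upwards [ae_restrict_mem measurableSet_ball] with x hx
      have hg := gnorm_nonneg U x
      have hφ := phi_nonneg hb p q x hg
      have hgK := gnorm_le hU x
      rw [Real.norm_of_nonneg (by positivity)]
      gcongr
      have h1 : gnorm U x ^ p ≤ (K : ℝ) ^ p := by gcongr
      have h2 : gnorm U x ^ q ≤ (K : ℝ) ^ q := Real.rpow_le_rpow hg hgK (by linarith)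
      exact add_le_add h1 (mul_le_mul (hM x hx) h2 (by positivity) hM0)
  rw [setIntegral_congr_fun measurableSet_ball (g := fun x =>
    phi b p q x (gnorm U x) ^ γ / phiMinus b p q (ball 0 1) t ^ γ)
    (fun x hx => by simp only [hug x hx])]
  have hδs : δ ^ s ≤ δ := by
    have := Real.rpow_le_rpow_of_exponent_ge hδ hδ1 hs1.le
    rwa [Real.rpow_one] at this
  calc δ ^ ((q - p) * γ) * (c' / 2)
      ≤ δ ^ ((q - p) * γ) * ((∫ x in ball (0 : En n) 1, (gnorm U x / t) ^ s) -
          volume.real (ball (0 : En n) 1) * δ ^ s) := by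
        gcongr
        have : volume.real (ball (0 : En n) 1) * δ ^ s ≤ volume.real (ball (0 : En n) 1) * δ := by
          gcongr
        linarith
    _ = ∫ x in ball (0 : En n) 1, δ ^ ((q - p) * γ) * ((gnorm U x / t) ^ s - δ ^ s) := by
        rw [integral_const_mul, integral_sub h_int (integrable_const _), setIntegral_const,
          smul_eq_mul]
    _ ≤ _ := by
        refine setIntegral_mono_on ((h_int.sub (integrable_const _)).const_mul _) h_int2
          measurableSet_ball fun x hx => ?_
        have := mul_rpow_sub_le_phi_div hb hp0 hpq hγ hδ hδ1 ht (gnorm_nonneg U x) hx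
        rwa [hγs] at this

/-- **Self-improvement of the infimal `φ`-fatness condition** (Lemma 3.2):
if a closed set `E` is locally uniformly infimally `φ`-fat with constant
`c_fat` and radius `r_o`, then there are `ε = ε(n,p,q,c_fat) ∈ (0,p-1)`,
`ĉ_fat = ĉ_fat(n,p,q,c_fat) > 0` and a radius `r̂_o = r̂_o(n,p,q,r_o) ∈ (0,1]`
such that `E` is locally uniformly infimally `φ^{1-ε/p}`-fat with constant
`ĉ_fat` and radius `r̂_o`. -/
theorem phi_fatness_self_improving
    (n : ℕ) (hn : 0 < n) (p q cfat : ℝ)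
    (hp : 1 < p) (hpq : p < q) (hcfat : 0 < cfat) :
    ∃ ε chat : ℝ, 0 < ε ∧ ε < p - 1 ∧ 0 < chat ∧
      ∀ ro : ℝ, 0 < ro → ro ≤ 1 →
        ∃ rhat : ℝ, 0 < rhat ∧ rhat ≤ 1 ∧
          ∀ (α A : ℝ) (a : En n → ℝ) (E : Set (En n)),
            0 < α → α ≤ 1 → (∀ x, 0 ≤ a x) → 0 ≤ A →
            (∀ x y, |a x - a y| ≤ A * dist x y ^ α) →
            IsClosed E → LocUnifPhiFat a p q E cfat ro →
            LocUnifPhiPowFat a p q (1 - ε / p) E chat rhat := by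
  have hV1 := volume_ball_pos (0 : En n) one_pos
  obtain ⟨ε, c', hε0, hε1, hc', H⟩ := exists_le_lintegral_gnorm_rpow n hn hp
    (c := cfat / volume.real (ball (0 : En n) 1)) (by positivity)
  set δ : ℝ := min 1 (c' / (2 * volume.real (ball (0 : En n) 1))) with hδ
  have hδ0 : 0 < δ := lt_min one_pos (by positivity)
  have hδ1 : δ ≤ 1 := min_le_left _ _
  have hδc : δ * volume.real (ball (0 : En n) 1) ≤ c' / 2 := by
    calc δ * volume.real (ball (0 : En n) 1)
        ≤ c' / (2 * volume.real (ball (0 : En n) 1)) * volume.real (ball (0 : En n) 1) := by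
          gcongr
          exact min_le_right _ _
      _ = c' / 2 := by field_simp
  refine ⟨ε, δ ^ ((q - p) * (1 - ε / p)) * (c' / 2), hε0, hε1, by positivity, fun ro hro hro1 =>
    ⟨ro, hro, hro1, ?_⟩⟩
  intro α A a E hα _ ha hA haA _ hE z hz r hr hrro
  have hF := uniformPFat_of_locUnifPhiFat ha hp hpq hA hα haA hE (z := z) hr hrro
  have hlow := H {x | z + r • x ∈ E} (by simpa using hz) hF
  have hsh : shiftedSet E z r = {x | z + r • x ∈ E} ∩ closedBall 0 (1 / 2) := by
    ext x; simp [shiftedSet, and_comm]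
  have hcont : Continuous a := by
    rw [continuous_iff_continuousAt]
    intro x
    rw [ContinuousAt, tendsto_iff_dist_tendsto_zero]
    have hlim : Filter.Tendsto (fun y => A * dist y x ^ α) (nhds x) (nhds (A * dist x x ^ α)) :=
      (((continuous_id.dist continuous_const).rpow_const fun _ => Or.inr hα.le).const_mul
        A).tendsto x
    rw [dist_self, Real.zero_rpow hα.ne', mul_zero] at hlim
    exact squeeze_zero (fun _ => dist_nonneg) (fun y => haA y x) hlim
  have hbm : Measurable fun x => a (z + r • x) := by
    have : Continuous fun x : En n => a (z + r • x) := by fun_prop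
    exact this.measurable
  have hM : ∀ x ∈ ball (0 : En n) 1, a (z + r • x) ≤ a z + A * r ^ α := by
    intro x hx
    have h2 : dist (z + r • x) z ≤ r := by
      rw [dist_eq_norm, add_sub_cancel_left, norm_smul, Real.norm_of_nonneg hr.le]
      exact mul_le_of_le_one_right hr.le (mem_ball_zero_iff.1 hx).le
    have h3 : A * dist (z + r • x) z ^ α ≤ A * r ^ α := by gcongr
    have h4 := (le_abs_self _).trans ((haA (z + r • x) z).trans h3)
    linarith
  refine le_ciInf fun t => ?_
  refine le_csInf ((Adm_nonempty (fun x hx => hx.1) t.2).image _) ?_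
  rintro _ ⟨u, hu, rfl⟩
  rw [hsh] at hu
  exact le_integral_phi_pow hn (fun x => ha _) hbm hM hp hpq hε1 hδ0 hδ1 hδc hlow t.2 hu
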